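/- arXiv:2509.11531 — 6 statements merged into one kernel-verified Lean document; each statement's English description precedes it below -/
import Mathlib

section
/- Let x̄ be a stationary point of (P) and λ̄ ∈ Λ(x̄), suppose the SOSC holds at (x̄, λ̄), and let c̄, l, ε > 0 be constants for which the uniform quadratic growth condition 𝓛(x, λ, c) ≥ 𝓛(x̄, λ, c) + (κ/2)‖x − x̄‖² holds for all x ∈ B_ε(x̄), λ ∈ Λ(x̄) ∩ B_ε(λ̄), c ≥ c̄ and κ ∈ [0, l). Then there exist positive constants l̂ and ε̂ ∈ (0, ε) such that for every c ≥ c̄ the local optimal solution mapping S_c(λ, v) := argmin over x ∈ B_{ε̂}(x̄) of {𝓛(x, λ, c) + (1/(2c))‖x − v‖²} satisfies the uniform isolated calmness property S_c(λ, v) ⊆ {x̄} + l̂(‖λ − λ̄‖ + ‖v − x̄‖)𝔹_X, together with ∅ ≠ S_c(λ, v) ⊆ int B_{ε̂}(x̄), for all λ ∈ B_{ε̂/(3l̂)}(λ̄) and all v ∈ B_{ε̂/(3l̂)}(x̄). -/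
open Metric Set Filter Topology Asymptotics
open scoped RealInnerProductSpace

noncomputable section

variable {X H : Type*} [NormedAddCommGroup X] [InnerProductSpace ℝ X] [FiniteDimensional ℝ X]
variable [NormedAddCommGroup H] [InnerProductSpace ℝ H] [FiniteDimensional ℝ H]

/-- The normal cone to a convex set `K` at `y` (empty if `y ∉ K`). -/
def normalCone (K : Set H) (y : H) : Set H :=
  {v | y ∈ K ∧ ∀ z ∈ K, ⟪v, z - y⟫ ≤ 0}

/-- The gradient in `x` of the Lagrangian `L(x, λ) = f(x) + ⟨λ, g(x)⟩`,
i.e. `∇f(x) + ∇g(x)* λ`. -/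
def gradLx (f : X → ℝ) (g : X → H) (x : X) (lam : H) : X :=
  gradient f x + ContinuousLinearMap.adjoint (fderiv ℝ g x) lam

/-- The set of Lagrange multipliers `Λ(x̄)`. -/
def Lambda (f : X → ℝ) (g : X → H) (K : Set H) (xbar : X) : Set H :=
  {lam | gradLx f g xbar lam = 0 ∧ lam ∈ normalCone K (g xbar)}

/-- The augmented Lagrangian `𝓛(x, λ, c)`. -/
def augLag (f : X → ℝ) (g : X → H) (K : Set H) (x : X) (lam : H) (c : ℝ) : ℝ :=
  f x + c / 2 * (infDist (g x + c⁻¹ • lam) K) ^ 2 - 1 / (2 * c) * ‖lam‖ ^ 2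

/-- The support function `σ(y, C)`. -/
def suppFn (y : H) (C : Set H) : ℝ := sSup ((fun z => ⟪y, z⟫) '' C)

/-- The second-order tangent set `T²_K(y, h)`. -/
def secondTangentSet (K : Set H) (y h : H) : Set H :=
  {w | (fun t : ℝ => infDist (y + t • h + (t ^ 2 / 2) • w) K) =o[𝓝[>] (0:ℝ)] fun t => t ^ 2}

/-- The critical cone `C(x̄)`. -/
def criticalCone (g : X → H) (K : Set H) (xbar : X) (lambar : H) : Set X :=
  {d | fderiv ℝ g xbar d ∈ tangentConeAt ℝ K (g xbar) ∧ ⟪fderiv ℝ g xbar d, lambar⟫ = 0}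

/-- The second-order sufficient condition (SOSC) at `(x̄, λ̄)`. -/
def SOSC (f : X → ℝ) (g : X → H) (K : Set H) (xbar : X) (lambar : H) : Prop :=
  ∀ d ∈ criticalCone g K xbar lambar, d ≠ 0 →
    0 < iteratedFDeriv ℝ 2 (fun x => f x + ⟪lambar, g x⟫) xbar ![d, d]
        - suppFn lambar (secondTangentSet K (g xbar) (fderiv ℝ g xbar d))

/-- `K` is `C²`-cone reducible: near every point of `K` it is the preimage of a pointed
closed convex cone under a twice continuously differentiable map with surjective derivative. -/
def C2ConeReducible (K : Set H) : Prop :=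
  ∀ y₀ ∈ K, ∃ (n : ℕ) (C : Set (EuclideanSpace ℝ (Fin n))) (N : Set H)
    (Θ : H → EuclideanSpace ℝ (Fin n)),
    IsClosed C ∧ Convex ℝ C ∧ (∀ r : ℝ, 0 ≤ r → ∀ z ∈ C, r • z ∈ C) ∧
    C ∩ (-C) ⊆ {0} ∧
    IsOpen N ∧ y₀ ∈ N ∧ ContDiffOn ℝ 2 Θ N ∧ Θ y₀ = 0 ∧
    Function.Surjective (fderiv ℝ Θ y₀) ∧ K ∩ N = Θ ⁻¹' C ∩ N

/-- The set of minimizers of `φ` over `B`. -/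
def argminOn (φ : X → ℝ) (B : Set X) : Set X := {x ∈ B | ∀ y ∈ B, φ x ≤ φ y}



lemma four_point (K : Set H) (hKne : K.Nonempty) (hKcl : IsClosed K) (hKconv : Convex ℝ K)
    (a p q : H) :
    infDist (a + p) K ^ 2 + infDist (a + q) K ^ 2 - infDist a K ^ 2 - infDist (a + p + q) K ^ 2
      ≤ 2 * (‖p‖ * ‖q‖) := by
  rcases eq_or_ne p 0 with rfl | hp
  · simp
  rcases eq_or_ne q 0 with rfl | hq
  · simp
  have hp' : 0 < ‖p‖ := norm_pos_iff.2 hp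
  have hq' : 0 < ‖q‖ := norm_pos_iff.2 hq
  obtain ⟨w, hw, hwd⟩ := hKcl.exists_infDist_eq_dist hKne a
  obtain ⟨z, hz, hzd⟩ := hKcl.exists_infDist_eq_dist hKne (a + p + q)
  obtain ⟨θ, η, hθ, hη, hsum, hbal⟩ : ∃ θ η : ℝ, 0 ≤ θ ∧ 0 ≤ η ∧ θ + η = 1 ∧
      ‖q‖ * θ = ‖p‖ * η :=
    ⟨‖p‖ / (‖p‖ + ‖q‖), ‖q‖ / (‖p‖ + ‖q‖), by positivity, by positivity,
      by field_simp, by field_simp⟩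
  have h1 : infDist (a + p) K ≤ ‖a + p - (η • w + θ • z)‖ := by
    rw [← dist_eq_norm]
    exact infDist_le_dist_of_mem (hKconv hw hz hη hθ (by linarith))
  have h2 : infDist (a + q) K ≤ ‖a + q - (θ • w + η • z)‖ := by
    rw [← dist_eq_norm]
    exact infDist_le_dist_of_mem (hKconv hw hz hθ hη (by linarith))
  have h1' := pow_le_pow_left₀ infDist_nonneg h1 2
  have h2' := pow_le_pow_left₀ infDist_nonneg h2 2
  obtain ⟨b, hb⟩ : ∃ b, b = a - w := ⟨_, rfl⟩
  obtain ⟨P, hP⟩ : ∃ P, P = p - θ • (z - w) := ⟨_, rfl⟩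
  obtain ⟨Q, hQ⟩ : ∃ Q, Q = q - η • (z - w) := ⟨_, rfl⟩
  have hη' : η = 1 - θ := by linarith
  have e1 : a + p - (η • w + θ • z) = b + P := by rw [hb, hP, hη']; module
  have e2 : a + q - (θ • w + η • z) = b + Q := by rw [hb, hQ, hη']; module
  have e3 : a + p + q - z = b + (P + Q) := by rw [hb, hP, hQ, hη']; module
  rw [hwd, hzd, dist_eq_norm, dist_eq_norm, e3, ← hb]
  rw [e1] at h1'
  rw [e2] at h2'
  have e4 : ‖q‖ • P - ‖p‖ • Q = ‖q‖ • p - ‖p‖ • q := by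
    have : ‖q‖ • P - ‖p‖ • Q = ‖q‖ • p - ‖p‖ • q - (‖q‖ * θ - ‖p‖ * η) • (z - w) := by
      rw [hP, hQ]; module
    rw [this, hbal]; simp
  have h3 : ‖‖q‖ • P - ‖p‖ • Q‖ ≤ 2 * (‖p‖ * ‖q‖) := by
    rw [e4]
    refine (norm_sub_le _ _).trans ?_
    rw [norm_smul, norm_smul, norm_norm, norm_norm]
    linarith
  have h3' := pow_le_pow_left₀ (norm_nonneg _) h3 2
  have h4 := sq_nonneg ‖‖q‖ • P + ‖p‖ • Q‖
  rw [norm_sub_sq_real] at h3'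
  rw [norm_add_sq_real] at h4
  simp only [inner_smul_left, inner_smul_right, RCLike.conj_to_real] at h3' h4
  have h5 : -⟪P, Q⟫ ≤ ‖p‖ * ‖q‖ := by
    have hpq : 0 < ‖p‖ * ‖q‖ := by positivity
    by_contra! hc
    nlinarith [mul_lt_mul_of_pos_left hc hpq]
  have i1 := norm_add_sq_real b P
  have i2 := norm_add_sq_real b Q
  have i3 := norm_add_sq_real b (P + Q)
  have i4 := norm_add_sq_real P Q
  rw [inner_add_right] at i3
  linarith

/-- **Proposition 3.1 (solvability and uniform isolated calmness of the PALM subproblem).** -/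
theorem palm_subproblem_solvability
    (f : X → ℝ) (g : X → H) (K : Set H)
    (hf : ContDiff ℝ 2 f) (hg : ContDiff ℝ 2 g)
    (hKne : K.Nonempty) (hKcl : IsClosed K) (hKconv : Convex ℝ K)
    (hKred : C2ConeReducible K)
    (xbar : X) (lambar : H) (hlam : lambar ∈ Lambda f g K xbar)
    (hSOSC : SOSC f g K xbar lambar)
    (cbar l ε : ℝ) (hcbar : 0 < cbar) (hl : 0 < l) (hε : 0 < ε)
    (hgrowth : ∀ x ∈ closedBall xbar ε, ∀ lam ∈ Lambda f g K xbar ∩ closedBall lambar ε,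
      ∀ c ≥ cbar, ∀ κ : ℝ, 0 ≤ κ → κ < l →
        augLag f g K xbar lam c + κ / 2 * ‖x - xbar‖ ^ 2 ≤ augLag f g K x lam c) :
    ∃ lhat > (0:ℝ), ∃ εhat > (0:ℝ), εhat < ε ∧
      ∀ c ≥ cbar, ∀ lam ∈ closedBall lambar (εhat / (3 * lhat)),
        ∀ v ∈ closedBall xbar (εhat / (3 * lhat)),
          (argminOn (fun x => augLag f g K x lam c + 1 / (2 * c) * ‖x - v‖ ^ 2) (closedBall xbar εhat)).Nonempty ∧
          argminOn (fun x => augLag f g K x lam c + 1 / (2 * c) * ‖x - v‖ ^ 2) (closedBall xbar εhat) ⊆ interior (closedBall xbar εhat) ∧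
          ∀ u ∈ argminOn (fun x => augLag f g K x lam c + 1 / (2 * c) * ‖x - v‖ ^ 2) (closedBall xbar εhat),
            ‖u - xbar‖ ≤ lhat * (‖lam - lambar‖ + ‖v - xbar‖) := by
  classical
  obtain ⟨M, s, hs, hM⟩ := (hg.contDiffAt (x := xbar)).of_le (m := 1) (by norm_num)
    |>.exists_lipschitzOnWith
  obtain ⟨r, hr, hrs⟩ := Metric.nhds_basis_closedBall.mem_iff.1 hs
  obtain ⟨δ, hδ0, hδε, hδr⟩ : ∃ δ : ℝ, 0 < δ ∧ δ < ε ∧ δ ≤ r :=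
    ⟨min r (ε / 2), by positivity, (min_le_right _ _).trans_lt (by linarith), min_le_left _ _⟩
  have hLip : ∀ x ∈ closedBall xbar δ, ‖g x - g xbar‖ ≤ M * ‖x - xbar‖ := by
    intro x hx
    have := hM.dist_le_mul x (hrs (closedBall_subset_closedBall hδr hx)) xbar
      (hrs (mem_closedBall_self hr.le))
    simpa [dist_eq_norm] using this
  obtain ⟨A, hA0, hAM, hAc⟩ : ∃ A : ℝ, 0 < A ∧ (M : ℝ) ≤ A ∧ 1 / cbar ≤ A :=
    ⟨M + 1 / cbar, by positivity, by simp [hcbar.le], by simp⟩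
  refine ⟨4 / l * A, by positivity, δ, hδ0, hδε, ?_⟩
  intro c hc lam hlamm v hv
  have hc0 : 0 < c := lt_of_lt_of_le hcbar hc
  have key : ∀ u ∈ argminOn (fun x => augLag f g K x lam c + 1 / (2 * c) * ‖x - v‖ ^ 2)
      (closedBall xbar δ), ‖u - xbar‖ ≤ 4 / l * A * (‖lam - lambar‖ + ‖v - xbar‖) := by
    rintro u ⟨huB, hu⟩
    have h1 := hu xbar (mem_closedBall_self hδ0.le)
    have h2 := hgrowth u (closedBall_subset_closedBall hδε.le huB) lambar
      ⟨hlam, mem_closedBall_self hε.le⟩ c hc (l / 2) (by linarith) (by linarith)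
    have h3 := four_point K hKne hKcl hKconv (g xbar + c⁻¹ • lambar) (g u - g xbar)
      (c⁻¹ • (lam - lambar))
    have e1 : g xbar + c⁻¹ • lambar + (g u - g xbar) = g u + c⁻¹ • lambar := by abel
    have e2 : g xbar + c⁻¹ • lambar + c⁻¹ • (lam - lambar) = g xbar + c⁻¹ • lam := by
      module
    have e3 : g u + c⁻¹ • lambar + c⁻¹ • (lam - lambar) = g u + c⁻¹ • lam := by
      module
    rw [e1, e2, e3, norm_smul, norm_inv, Real.norm_of_nonneg hc0.le] at h3
    have h4 := mul_le_mul_of_nonneg_left h3 (by positivity : 0 ≤ c / 2)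
    have e4 : c / 2 * (2 * (‖g u - g xbar‖ * (c⁻¹ * ‖lam - lambar‖)))
        = ‖g u - g xbar‖ * ‖lam - lambar‖ := by field_simp
    rw [e4] at h4
    have h5 : ‖g u - g xbar‖ * ‖lam - lambar‖ ≤ A * ‖u - xbar‖ * ‖lam - lambar‖ := by
      gcongr
      exact (hLip u huB).trans (by gcongr)
    have h6 : 1 / (2 * c) * ‖xbar - v‖ ^ 2 - 1 / (2 * c) * ‖u - v‖ ^ 2
        ≤ A * ‖u - xbar‖ * ‖v - xbar‖ := by
      have i1 := norm_sub_sq_real (u - xbar) (v - xbar)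
      rw [sub_sub_sub_cancel_right] at i1
      have i2 := real_inner_le_norm (u - xbar) (v - xbar)
      rw [norm_sub_rev xbar v, ← mul_sub]
      have i3 : 1 / c ≤ A := (one_div_le_one_div_of_le hcbar hc).trans hAc
      calc 1 / (2 * c) * (‖v - xbar‖ ^ 2 - ‖u - v‖ ^ 2)
          ≤ 1 / (2 * c) * (2 * (‖u - xbar‖ * ‖v - xbar‖)) := by
            gcongr
            nlinarith [sq_nonneg ‖u - xbar‖]
        _ = 1 / c * (‖u - xbar‖ * ‖v - xbar‖) := by field_simp
        _ ≤ A * (‖u - xbar‖ * ‖v - xbar‖) := by gcongr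
        _ = _ := by ring
    simp only [augLag] at h1 h2
    have h7 : l / 4 * ‖u - xbar‖ ^ 2 ≤ A * ‖u - xbar‖ * (‖lam - lambar‖ + ‖v - xbar‖) := by
      linarith
    rcases (norm_nonneg (u - xbar)).eq_or_lt with h0 | h0
    · rw [← h0]; positivity
    · have h8 : l / 4 * ‖u - xbar‖ ≤ A * (‖lam - lambar‖ + ‖v - xbar‖) := by
        refine le_of_mul_le_mul_right ?_ h0
        linarith
      calc ‖u - xbar‖ = 4 / l * (l / 4 * ‖u - xbar‖) := by field_simp
        _ ≤ 4 / l * (A * (‖lam - lambar‖ + ‖v - xbar‖)) := by gcongr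
        _ = _ := by ring
  refine ⟨?_, ?_, key⟩
  · have hcont : Continuous (fun x => augLag f g K x lam c + 1 / (2 * c) * ‖x - v‖ ^ 2) := by
      have hfc := hf.continuous
      have hgc := hg.continuous
      have hd : Continuous fun x => infDist (g x + c⁻¹ • lam) K :=
        (continuous_infDist_pt K).comp (by fun_prop)
      unfold augLag
      fun_prop
    obtain ⟨u, hu, hmin⟩ := (isCompact_closedBall xbar δ).exists_isMinOn
      ⟨xbar, mem_closedBall_self hδ0.le⟩ hcont.continuousOn
    exact ⟨u, hu, fun y hy => hmin hy⟩
  · intro u hu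
    apply ball_subset_interior_closedBall
    rw [mem_ball, dist_eq_norm]
    refine (key u hu).trans_lt ?_
    rw [mem_closedBall, dist_eq_norm] at hlamm hv
    have hB : 0 < 4 / l * A := by positivity
    calc 4 / l * A * (‖lam - lambar‖ + ‖v - xbar‖)
        ≤ 4 / l * A * (δ / (3 * (4 / l * A)) + δ / (3 * (4 / l * A))) := by gcongr
      _ = 2 / 3 * δ := by field_simp; ring
      _ < δ := by linarith
end
end

section
/- Let (x̄, λ̄) be a KKT point of (P). The solution mapping S_KKT is semi-isolated calm at the origin for (x̄, λ̄) if and only if there exist ε > 0 and τ > 0 such that the estimate ‖x − x̄‖ + dist(λ, Λ(x̄)) ≤ τ · r(x, λ) holds for all pairs (x, λ) ∈ B_ε(x̄, λ̄). -/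
open Metric Set Filter Topology Asymptotics
open scoped RealInnerProductSpace

noncomputable section

variable {X H : Type*} [NormedAddCommGroup X] [InnerProductSpace ℝ X] [FiniteDimensional ℝ X]
variable [NormedAddCommGroup H] [InnerProductSpace ℝ H] [FiniteDimensional ℝ H]

/-- The KKT kktResidual `r(x, λ) = ‖∇ₓL(x, λ)‖ + ‖g(x) - Π_K(g(x) + λ)‖`. -/
def kktResidual (f : X → ℝ) (g : X → H) (projK : H → H) (x : X) (lam : H) : ℝ :=
  ‖gradLx f g x lam‖ + ‖g x - projK (g x + lam)‖

/-- The perturbed KKT solution mapping `S_KKT(a, b)`. -/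
def SKKT (f : X → ℝ) (g : X → H) (K : Set H) (ab : X × H) : Set (X × H) :=
  {p | ab.1 = gradLx f g p.1 p.2 ∧ p.2 ∈ normalCone K (g p.1 + ab.2)}

/-- Semi-isolated calmness of `S_KKT` at the origin for `(x̄, λ̄)`. -/
def SemiIsolatedCalm (f : X → ℝ) (g : X → H) (K : Set H) (xbar : X) (lambar : H) : Prop :=
  ∃ ε > (0:ℝ), ∃ δ > (0:ℝ), ∃ l > (0:ℝ), ∀ ab : X × H, ‖ab‖ ≤ δ →
    ∀ p ∈ SKKT f g K ab ∩ closedBall ((xbar, lambar) : X × H) ε,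
      ∃ q : X × H, q.1 = xbar ∧ q.2 ∈ Lambda f g K xbar ∧
        ‖p - q‖ ≤ l * (‖ab.1‖ + ‖ab.2‖)


theorem aux_nonexp {K : Set H} {y z u v : H} (hu : u ∈ normalCone K y)
    (hv : v ∈ normalCone K z) : ‖y - z‖ ≤ ‖(y + u) - (z + v)‖ := by
  have h1 := hu.2 z hv.1
  have h2 := hv.2 y hu.1
  have h3 : ⟪u - v, y - z⟫ ≥ 0 := by
    have : ⟪u - v, y - z⟫ = - ⟪u, z - y⟫ - ⟪v, y - z⟫ := by
      rw [inner_sub_left, ← neg_sub z y, inner_neg_right, inner_neg_right]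
    linarith
  have h4 : ‖y - z‖ * ‖y - z‖ ≤ ‖(y + u) - (z + v)‖ * ‖y - z‖ := by
    have h5 := real_inner_le_norm ((y + u) - (z + v)) (y - z)
    have h6 : (y + u) - (z + v) = (y - z) + (u - v) := by abel
    have h7 : ⟪(y + u) - (z + v), y - z⟫ = ‖y - z‖ * ‖y - z‖ + ⟪u - v, y - z⟫ := by
      rw [h6, inner_add_left, real_inner_self_eq_norm_mul_norm]
    linarith
  by_contra hlt
  push Not at hlt
  nlinarith [norm_nonneg ((y + u) - (z + v)), norm_nonneg (y - z)]

theorem aux_proj {K : Set H} (hKconv : Convex ℝ K) {projK : H → H}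
    (hproj : ∀ y : H, projK y ∈ K ∧ ∀ z ∈ K, ‖y - projK y‖ ≤ ‖y - z‖) (y : H) :
    y - projK y ∈ normalCone K (projK y) := by
  obtain ⟨hm, hle⟩ := hproj y
  refine ⟨hm, (norm_eq_iInf_iff_real_inner_le_zero hKconv hm).1 ?_⟩
  have : Nonempty K := ⟨⟨_, hm⟩⟩
  apply le_antisymm
  · exact le_ciInf fun w => hle w w.2
  · exact ciInf_le (f := fun w : K => ‖y - w‖) ⟨0, by rintro _ ⟨w, rfl⟩; exact norm_nonneg _⟩ ⟨_, hm⟩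

theorem aux_proj_lip {K : Set H} (hKconv : Convex ℝ K) {projK : H → H}
    (hproj : ∀ y : H, projK y ∈ K ∧ ∀ z ∈ K, ‖y - projK y‖ ≤ ‖y - z‖) (y z : H) :
    ‖projK y - projK z‖ ≤ ‖y - z‖ := by
  simpa using aux_nonexp (aux_proj hKconv hproj y) (aux_proj hKconv hproj z)

theorem aux_proj_eq {K : Set H} (hKconv : Convex ℝ K) {projK : H → H}
    (hproj : ∀ y : H, projK y ∈ K ∧ ∀ z ∈ K, ‖y - projK y‖ ≤ ‖y - z‖) {y u : H}
    (hu : u ∈ normalCone K y) : projK (y + u) = y := by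
  have := aux_nonexp (aux_proj hKconv hproj (y + u)) hu
  simpa [sub_eq_zero] using this

theorem aux_closed (f : X → ℝ) (g : X → H) (K : Set H) (x : X) :
    IsClosed (Lambda f g K x) := by
  have : Lambda f g K x = {lam | gradLx f g x lam = 0} ∩
      ({lam | g x ∈ K} ∩ ⋂ z ∈ K, {lam : H | ⟪lam, z - g x⟫ ≤ 0}) := by
    ext l; simp [Lambda, normalCone]
  rw [this]
  refine IsClosed.inter ?_ (IsClosed.inter isClosed_const ?_)
  · refine isClosed_eq ?_ continuous_const
    unfold gradLx
    fun_prop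
  · refine isClosed_biInter fun z _ => isClosed_le ?_ continuous_const
    fun_prop

theorem aux_grad_cont {f : X → ℝ} {g : X → H} (hf : ContDiff ℝ 2 f) (hg : ContDiff ℝ 2 g) :
    Continuous fun p : X × H => gradLx f g p.1 p.2 := by
  have h1 : Continuous (fderiv ℝ f) := hf.continuous_fderiv (by norm_num)
  have h2 : Continuous (fderiv ℝ g) := hg.continuous_fderiv (by norm_num)
  have h3 : Continuous (gradient f) :=
    (InnerProductSpace.toDual ℝ X).symm.continuous.comp h1
  have h4 : Continuous fun x => ContinuousLinearMap.adjoint (fderiv ℝ g x) :=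
    (ContinuousLinearMap.adjoint (𝕜 := ℝ) (E := X) (F := H)).continuous.comp h2
  unfold gradLx
  exact (h3.comp continuous_fst).add ((h4.comp continuous_fst).clm_apply continuous_snd)

/-- **Proposition 2.1.** Semi-isolated calmness of `S_KKT` at the origin for `(x̄, λ̄)` is
equivalent to a local error bound in terms of the KKT residual. -/
theorem semiIsolatedCalm_iff_errorBound
    (f : X → ℝ) (g : X → H) (K : Set H)
    (hf : ContDiff ℝ 2 f) (hg : ContDiff ℝ 2 g)
    (hKne : K.Nonempty) (hKcl : IsClosed K) (hKconv : Convex ℝ K)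
    (projK : H → H)
    (hproj : ∀ y : H, projK y ∈ K ∧ ∀ z ∈ K, ‖y - projK y‖ ≤ ‖y - z‖)
    (xbar : X) (lambar : H)
    (hKKT : gradLx f g xbar lambar = 0 ∧ lambar ∈ normalCone K (g xbar)) :
    SemiIsolatedCalm f g K xbar lambar ↔
      ∃ ε > (0:ℝ), ∃ τ > (0:ℝ), ∀ x : X, ∀ lam : H,
        dist (x, lam) ((xbar, lambar) : X × H) ≤ ε →
          ‖x - xbar‖ + infDist lam (Lambda f g K xbar) ≤ τ * kktResidual f g projK x lam := by
  have hproj0 : projK (g xbar + lambar) = g xbar := aux_proj_eq hKconv hproj hKKT.2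
  have hne : (Lambda f g K xbar).Nonempty := ⟨lambar, hKKT⟩
  constructor
  · rintro ⟨ε, hε, δ, hδ, l, hl, h⟩
    have hgc : Continuous g := hg.continuous
    have hpc : Continuous projK := by
      refine (LipschitzWith.of_dist_le_mul (K := 1) fun y z => ?_).continuous
      simpa [dist_eq_norm] using aux_proj_lip hKconv hproj y z
    let B : X × H → H := fun p => projK (g p.1 + p.2) - g p.1
    have hB : Continuous B := by fun_prop
    have hB0 : B (xbar, lambar) = 0 := by simp [B, hproj0]
    let P : X × H → X × H := fun p => (p.1, p.2 - B p)
    have hP : Continuous P := by fun_prop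
    have hP0 : P (xbar, lambar) = (xbar, lambar) := by simp [P, hB0]
    let Q : X × H → X × H := fun p => (gradLx f g (P p).1 (P p).2, B p)
    have hQ : Continuous Q := ((aux_grad_cont hf hg).comp hP).prodMk hB
    have hQ0 : Q (xbar, lambar) = 0 := by
      simp only [Q, hP0, hB0, hKKT.1]; rfl
    have hD : Continuous fun p : X × H => ‖fderiv ℝ g p.1‖ :=
      ((hg.continuous_fderiv (by norm_num)).comp continuous_fst).norm
    have e1 : ∀ᶠ p in 𝓝 (xbar, lambar), ‖Q p‖ < δ :=
      hQ.norm.continuousAt.eventually_lt continuousAt_const (by simpa [hQ0] using hδ)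
    have e2 : ∀ᶠ p in 𝓝 (xbar, lambar), dist (P p) (xbar, lambar) < ε :=
      (hP.dist continuous_const).continuousAt.eventually_lt continuousAt_const
        (by simpa [hP0] using hε)
    obtain ⟨M, hM⟩ : ∃ M, M = ‖fderiv ℝ g xbar‖ + 1 := ⟨_, rfl⟩
    have hM0 : 0 < M := by rw [hM]; positivity
    have e3 : ∀ᶠ p in 𝓝 (xbar, lambar), ‖fderiv ℝ g p.1‖ < M :=
      hD.continuousAt.eventually_lt continuousAt_const (by simp [hM])
    obtain ⟨η, hη, hall⟩ :=
      Metric.nhds_basis_closedBall.eventually_iff.1 (e1.and (e2.and e3))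
    refine ⟨η, hη, 2 * (l * (M + 1)) + 1, by positivity, fun x lam hx => ?_⟩
    obtain ⟨h1, h2, h3⟩ := hall (mem_closedBall.2 hx)
    obtain ⟨q, hq1, hq2, hq3⟩ := h (Q (x, lam)) h1.le (P (x, lam)) ⟨⟨rfl, by
      have := aux_proj hKconv hproj (g x + lam)
      convert this using 1
      · simp [P, Q, B]
      · simp only [P, B]; abel⟩, mem_closedBall.2 h2.le⟩
    set b := B (x, lam) with hb
    have hbn : ‖g x - projK (g x + lam)‖ = ‖b‖ := by rw [hb, norm_sub_rev]
    have ha : ‖(Q (x, lam)).1‖ ≤ ‖gradLx f g x lam‖ + M * ‖b‖ := by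
      have : (Q (x, lam)).1
          = gradLx f g x lam - ContinuousLinearMap.adjoint (fderiv ℝ g x) b := by
        simp only [Q, P, gradLx, map_sub, ← hb]; abel
      rw [this]
      refine (norm_sub_le _ _).trans (add_le_add le_rfl ?_)
      refine (ContinuousLinearMap.le_opNorm _ _).trans ?_
      rw [LinearIsometryEquiv.norm_map]
      exact mul_le_mul_of_nonneg_right h3.le (norm_nonneg _)
    have hr : ‖(Q (x, lam)).1‖ + ‖(Q (x, lam)).2‖ ≤ (M + 1) * kktResidual f g projK x lam := by
      have : ‖(Q (x, lam)).2‖ = ‖b‖ := rfl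
      unfold kktResidual
      rw [hbn, this]
      nlinarith [mul_nonneg hM0.le (norm_nonneg (gradLx f g x lam))]
    have hbr : ‖b‖ ≤ kktResidual f g projK x lam := by
      unfold kktResidual
      rw [hbn]; linarith [norm_nonneg (gradLx f g x lam)]
    have hx1 : ‖x - xbar‖ ≤ ‖P (x, lam) - q‖ := by
      have := norm_fst_le (P (x, lam) - q)
      simpa [P, hq1] using this
    have hx2 : ‖lam - b - q.2‖ ≤ ‖P (x, lam) - q‖ := norm_snd_le (P (x, lam) - q)
    have hx3 : infDist lam (Lambda f g K xbar) ≤ ‖lam - b - q.2‖ + ‖b‖ := by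
      refine (infDist_le_dist_of_mem hq2).trans ?_
      rw [dist_eq_norm]
      refine le_trans (le_of_eq ?_) (norm_add_le _ _)
      congr 1; abel
    have := mul_le_mul_of_nonneg_left hr hl.le
    nlinarith
  · rintro ⟨ε, hε, τ, hτ, h⟩
    refine ⟨ε, hε, 1, one_pos, 2 * τ, by positivity, ?_⟩
    rintro ⟨a, b⟩ - ⟨x, lam⟩ ⟨⟨h1, h2⟩, hp⟩
    simp only at h1 h2
    have hx := h x lam (mem_closedBall.1 hp)
    obtain ⟨m, hm, hd⟩ := (aux_closed f g K xbar).exists_infDist_eq_dist hne lam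
    refine ⟨(xbar, m), rfl, hm, ?_⟩
    have hr : kktResidual f g projK x lam ≤ ‖a‖ + 2 * ‖b‖ := by
      unfold kktResidual
      rw [← h1]
      have e1 := aux_proj_eq hKconv hproj h2
      have e2 := aux_proj_lip hKconv hproj (g x + b + lam) (g x + lam)
      rw [e1] at e2
      have e3 : g x + b + lam - (g x + lam) = b := by abel
      rw [e3] at e2
      have e4 : g x - projK (g x + lam) = (g x + b - projK (g x + lam)) - b := by abel
      rw [e4]
      linarith [norm_sub_le (g x + b - projK (g x + lam)) b]
    rw [hd, dist_eq_norm] at hx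
    have : ‖((x, lam) : X × H) - (xbar, m)‖ ≤ ‖x - xbar‖ + ‖lam - m‖ := by
      rw [Prod.mk_sub_mk, Prod.norm_mk]
      exact max_le (by linarith [norm_nonneg (lam - m)]) (by linarith [norm_nonneg (x - xbar)])
    simp only
    nlinarith [mul_le_mul_of_nonneg_left hr hτ.le, mul_nonneg hτ.le (norm_nonneg a)]
end
end

section
/- Let (x̄, λ̄) be a KKT point of (P). If the multiplier mapping M_x̄ is calm at the origin for λ̄ and the SOSC holds at (x̄, λ̄), then the solution mapping S_KKT is semi-isolated calm at the origin for (x̄, λ̄). -/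
open Metric Set Filter Topology Asymptotics
open scoped RealInnerProductSpace

noncomputable section

variable {X H : Type*} [NormedAddCommGroup X] [InnerProductSpace ℝ X] [FiniteDimensional ℝ X]
variable [NormedAddCommGroup H] [InnerProductSpace ℝ H] [FiniteDimensional ℝ H]

/-- The multiplier mapping `M_x̄(a, b)`. -/
def MultMap (f : X → ℝ) (g : X → H) (K : Set H) (xbar : X) (ab : X × H) : Set H :=
  {lam | ab.1 = gradLx f g xbar lam ∧ lam ∈ normalCone K (g xbar - ab.2)}

/-- Calmness of the multiplier mapping `M_x̄` at the origin for `λ̄`. -/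
def MultMapCalm (f : X → ℝ) (g : X → H) (K : Set H) (xbar : X) (lambar : H) : Prop :=
  ∃ κ > (0:ℝ), ∃ ε > (0:ℝ), ∃ δ > (0:ℝ), ∀ ab : X × H, ‖ab‖ ≤ ε →
    ∀ lam ∈ MultMap f g K xbar ab ∩ closedBall lambar δ,
      ∃ lam₀ ∈ Lambda f g K xbar, ‖lam - lam₀‖ ≤ κ * ‖ab‖

theorem aux_deriv_nonpos {θ : ℝ → ℝ} {m : ℝ} (hθ : HasDerivAt θ m 0) (h0 : θ 0 = 0)
    (hle : ∀ᶠ s in 𝓝[>] (0:ℝ), θ s ≤ 0) : m ≤ 0 := by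
  have h1 : Tendsto (fun s => s⁻¹ • (θ (0 + s) - θ 0)) (𝓝[>] 0) (𝓝 m) :=
    hθ.tendsto_slope_zero_right
  refine le_of_tendsto h1 ?_
  filter_upwards [hle, self_mem_nhdsWithin] with s hs hs0
  have : (0:ℝ) < s := hs0
  rw [zero_add, h0, sub_zero, smul_eq_mul]
  exact mul_nonpos_of_nonneg_of_nonpos (inv_nonneg.2 this.le) hs


/-- Local conic charts coming from cone reducibility. -/
theorem aux_chart (K : Set H) (hKred : C2ConeReducible K) (y₀ : H) (hy₀ : y₀ ∈ K) :
    ∃ (C : Set H) (Φ Ψ : H → H), IsClosed C ∧ (∀ r : ℝ, 0 ≤ r → ∀ z ∈ C, r • z ∈ C) ∧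
      ContDiffAt ℝ 2 Ψ 0 ∧ Ψ 0 = y₀ ∧ fderiv ℝ Ψ 0 = ContinuousLinearMap.id ℝ H ∧
      Φ y₀ = 0 ∧ HasFDerivAt Φ (ContinuousLinearMap.id ℝ H) y₀ ∧
      (∀ᶠ p in 𝓝 (0:H), p ∈ C → Ψ p ∈ K) ∧
      (∀ᶠ y in 𝓝 y₀, Ψ (Φ y) = y ∧ (y ∈ K → Φ y ∈ C)) := by
  obtain ⟨n, C, N, Θ, hCcl, -, hCcone, -, hNo, hyN, hΘ, hΘ0, hsurj, hKN⟩ := hKred y₀ hy₀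
  set A := fderiv ℝ Θ y₀ with hA
  have hΘat : ContDiffAt ℝ 2 Θ y₀ := hΘ.contDiffAt (hNo.mem_nhds hyN)
  obtain ⟨R, hR⟩ := A.exists_rightInverse_of_surjective (LinearMap.range_eq_top.2 hsurj)
  have hAR : ∀ z, A (R z) = z := fun z => by
    have := congrArg (fun T => T z) hR
    simpa using this
  let Φ : H → H := fun y => (y - y₀) + R (Θ y - A (y - y₀))
  have hAΦ : ∀ y, A (Φ y) = Θ y := fun y => by
    simp only [Φ, map_add, hAR]; abel
  have hΦC : ContDiffAt ℝ 2 Φ y₀ := by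
    have h1 : ContDiffAt ℝ 2 (fun y => y - y₀) y₀ := contDiffAt_id.sub contDiffAt_const
    exact h1.add (R.contDiff.contDiffAt.comp y₀ (hΘat.sub (A.contDiff.contDiffAt.comp y₀ h1)))
  have hΦ' : HasFDerivAt Φ (ContinuousLinearMap.id ℝ H) y₀ := by
    have h1 : HasFDerivAt (fun y => y - y₀) (ContinuousLinearMap.id ℝ H) y₀ :=
      (hasFDerivAt_id y₀).sub_const y₀
    have h2 : HasFDerivAt Θ A y₀ := (hΘat.differentiableAt (by norm_num)).hasFDerivAt
    have h3 : HasFDerivAt (fun y => A (y - y₀)) A y₀ := by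
      exact A.hasFDerivAt.comp y₀ h1
    have h4 := h1.add (R.hasFDerivAt.comp y₀ (h2.sub h3))
    rw [sub_self, ContinuousLinearMap.comp_zero, add_zero] at h4
    exact h4
  have hΦ0 : Φ y₀ = 0 := by simp [Φ, hΘ0]
  have hΦe : HasFDerivAt Φ ((ContinuousLinearEquiv.refl ℝ H : H ≃L[ℝ] H) : H →L[ℝ] H) y₀ := hΦ'
  have hn2 : (2 : WithTop ℕ∞) ≠ 0 := by norm_num
  have hst := hΦC.hasStrictFDerivAt' hΦe hn2
  refine ⟨A ⁻¹' C, Φ, hΦC.localInverse hΦe hn2, hCcl.preimage A.continuous, ?_, ?_, ?_, ?_, hΦ0,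
    hΦ', ?_, ?_⟩
  · intro r hr z hz
    simpa using hCcone r hr _ hz
  · have := hΦC.to_localInverse hΦe hn2
    rwa [hΦ0] at this
  · have := hΦC.localInverse_apply_image hΦe hn2
    rwa [hΦ0] at this
  · have := hst.to_localInverse.hasFDerivAt.fderiv
    rw [hΦ0] at this
    exact this
  · have h1 := hst.eventually_right_inverse
    have h2 := hst.localInverse_tendsto
    rw [hΦ0] at h1 h2
    have h3 := h2.eventually (hNo.mem_nhds hyN)
    filter_upwards [h1, h3] with p hp1 hp2 hpC
    change hst.localInverse Φ _ y₀ p ∈ K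
    have : hst.localInverse Φ _ y₀ p ∈ Θ ⁻¹' C ∩ N := by
      refine ⟨?_, hp2⟩
      change Θ _ ∈ C
      rw [← hAΦ, hp1]; exact hpC
    rw [← hKN] at this
    exact this.1
  · filter_upwards [hst.eventually_left_inverse, hNo.mem_nhds hyN] with y hy1 hy2
    refine ⟨hy1, fun hyK => ?_⟩
    have : y ∈ Θ ⁻¹' C ∩ N := by rw [← hKN]; exact ⟨hyK, hy2⟩
    change A (Φ y) ∈ C
    rw [hAΦ]; exact this.1

/-- Second-order Taylor expansion along a ray. -/
theorem aux_taylor (Ψ : H → H) (hΨ : ContDiffAt ℝ 2 Ψ 0)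
    (hid : fderiv ℝ Ψ 0 = ContinuousLinearMap.id ℝ H) (h : H) :
    (fun t : ℝ => Ψ (t • h) - (Ψ 0 + t • h + (t ^ 2 / 2) • fderiv ℝ (fderiv ℝ Ψ) 0 h h))
      =o[𝓝[>] (0:ℝ)] fun t => t ^ 2 := by
  set B := fderiv ℝ (fderiv ℝ Ψ) 0 with hB
  have hD : HasFDerivAt (fderiv ℝ Ψ) B 0 :=
    ((hΨ.fderiv_right (m := 1) (by norm_num)).differentiableAt (by norm_num)).hasFDerivAt
  have hdiff : ∀ᶠ p in 𝓝 (0:H), DifferentiableAt ℝ Ψ p := by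
    filter_upwards [hΨ.eventually (by simp)] with p hp
    exact hp.differentiableAt (by norm_num)
  rw [isLittleO_iff]
  intro c hc
  have hc' : 0 < c / (‖h‖ ^ 2 + 1) := by positivity
  have hlo := (isLittleO_iff.1 hD.isLittleO) hc'
  obtain ⟨r, hr, hball⟩ := Metric.eventually_nhds_iff.1 (hdiff.and hlo)
  have hsm : ∀ᶠ t in 𝓝[>] (0:ℝ), ‖t • h‖ < r := by
    have : Tendsto (fun t : ℝ => ‖t • h‖) (𝓝 0) (𝓝 ‖(0:ℝ) • h‖) :=
      Continuous.tendsto (by fun_prop) 0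
    rw [zero_smul, norm_zero] at this
    exact (this.mono_left nhdsWithin_le_nhds).eventually (gt_mem_nhds hr)
  filter_upwards [hsm, self_mem_nhdsWithin] with t htr ht0
  have ht : (0:ℝ) < t := ht0
  have hseg : ∀ s ∈ Icc (0:ℝ) 1, dist (s • (t • h)) 0 < r := by
    intro s hs
    rw [dist_zero_right, norm_smul, Real.norm_of_nonneg hs.1]
    exact lt_of_le_of_lt (mul_le_of_le_one_left (norm_nonneg _) hs.2) htr
  have key := norm_image_sub_le_of_norm_deriv_le_segment_01'
    (f := fun s : ℝ => Ψ (s • (t • h)) - s • (t • h) - (s ^ 2 / 2) • B (t • h) (t • h))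
    (f' := fun s : ℝ => fderiv ℝ Ψ (s • (t • h)) (t • h) - (t • h) - s • B (t • h) (t • h))
    (C := c * t ^ 2) ?_ ?_
  · have e : Ψ (t • h) - (Ψ 0 + t • h + (t ^ 2 / 2) • B h h) =
      (Ψ ((1:ℝ) • (t • h)) - (1:ℝ) • (t • h) - ((1:ℝ) ^ 2 / 2) • B (t • h) (t • h)) -
      (Ψ ((0:ℝ) • (t • h)) - (0:ℝ) • (t • h) - ((0:ℝ) ^ 2 / 2) • B (t • h) (t • h)) := by
      simp only [map_smul, smul_apply, one_smul, zero_smul]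
      module
    rw [e, Real.norm_of_nonneg (by positivity : (0:ℝ) ≤ t ^ 2)]
    exact key
  · intro s hs
    apply HasDerivAt.hasDerivWithinAt
    have hs1 := (hball (hseg s hs)).1.hasFDerivAt
    have l1 : HasDerivAt (fun s : ℝ => s • (t • h)) (t • h) s := by
      simpa using (hasDerivAt_id s).smul_const (t • h)
    have l2 := hs1.comp_hasDerivAt s l1
    have l3 : HasDerivAt (fun s : ℝ => (s ^ 2 / 2)) s s := by
      have := ((hasDerivAt_id s).pow 2).div_const 2
      simpa using this
    exact (l2.sub l1).sub (l3.smul_const _)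
  · intro s hs
    have hs1 := (hball (hseg s ⟨hs.1, hs.2.le⟩)).2
    rw [hid, sub_zero] at hs1
    have e : fderiv ℝ Ψ (s • (t • h)) (t • h) - (t • h) - s • B (t • h) (t • h) =
      (fderiv ℝ Ψ (s • (t • h)) - ContinuousLinearMap.id ℝ H - B (s • (t • h))) (t • h) := by
      simp only [sub_apply, map_smul, smul_apply, ContinuousLinearMap.id_apply]
      module
    rw [e]
    refine (ContinuousLinearMap.le_opNorm _ _).trans ?_
    refine (mul_le_mul_of_nonneg_right hs1 (norm_nonneg _)).trans ?_
    rw [norm_smul s, Real.norm_of_nonneg hs.1, norm_smul, Real.norm_of_nonneg ht.le]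
    have h2 : c / (‖h‖ ^ 2 + 1) * ‖h‖ ^ 2 ≤ c := by
      rw [div_mul_eq_mul_div, div_le_iff₀ (by positivity)]
      nlinarith [hc, sq_nonneg ‖h‖]
    have h3 : c / (‖h‖ ^ 2 + 1) * (s * (t * ‖h‖)) * (t * ‖h‖) =
      s * (t ^ 2 * (c / (‖h‖ ^ 2 + 1) * ‖h‖ ^ 2)) := by ring
    rw [h3]
    have h4 : t ^ 2 * (c / (‖h‖ ^ 2 + 1) * ‖h‖ ^ 2) ≤ t ^ 2 * c := by gcongr
    have h5 : 0 ≤ t ^ 2 * (c / (‖h‖ ^ 2 + 1) * ‖h‖ ^ 2) := by positivity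
    calc _ ≤ 1 * (t ^ 2 * (c / (‖h‖ ^ 2 + 1) * ‖h‖ ^ 2)) :=
          mul_le_mul_of_nonneg_right hs.2.le h5
      _ ≤ c * t ^ 2 := by linarith

/-- The support function is nonpositive on second order tangent sets. -/
theorem aux_bdd (K : Set H) (y h lam : H) (hlam : lam ∈ normalCone K y) (hperp : ⟪h, lam⟫ = 0)
    (w : H) (hw : w ∈ secondTangentSet K y h) : ⟪lam, w⟫ ≤ 0 := by
  have hKne : K.Nonempty := ⟨y, hlam.1⟩
  have hdist : ∀ ξ : H, ⟪lam, ξ - y⟫ ≤ ‖lam‖ * infDist ξ K := by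
    intro ξ
    refine le_of_forall_pos_le_add fun e he => ?_
    have he' : 0 < e / (‖lam‖ + 1) := by positivity
    obtain ⟨z, hz, hzd⟩ := (infDist_lt_iff hKne (x := ξ) (r := infDist ξ K + e / (‖lam‖ + 1))).1
      (by linarith)
    have h1 : ⟪lam, ξ - y⟫ = ⟪lam, ξ - z⟫ + ⟪lam, z - y⟫ := by
      rw [← inner_add_right]; congr 1; abel
    have h2 := hlam.2 z hz
    have h3 : ⟪lam, ξ - z⟫ ≤ ‖lam‖ * ‖ξ - z‖ := real_inner_le_norm _ _
    rw [dist_eq_norm] at hzd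
    have h4 : ‖lam‖ * ‖ξ - z‖ ≤ ‖lam‖ * (infDist ξ K + e / (‖lam‖ + 1)) := by gcongr
    have h5 : ‖lam‖ * (e / (‖lam‖ + 1)) ≤ e := by
      rw [mul_div_assoc', div_le_iff₀ (by positivity)]
      nlinarith [norm_nonneg lam]
    linarith
  have hlo : (fun t : ℝ => infDist (y + t • h + (t ^ 2 / 2) • w) K) =o[𝓝[>] (0:ℝ)]
    fun t => t ^ 2 := hw
  have hlim := (hlo.tendsto_div_nhds_zero.const_mul (2 * ‖lam‖))
  rw [mul_zero] at hlim
  refine ge_of_tendsto hlim ?_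
  filter_upwards [self_mem_nhdsWithin] with t ht0
  have ht : (0:ℝ) < t := ht0
  have h1 := hdist (y + t • h + (t ^ 2 / 2) • w)
  have e : y + t • h + (t ^ 2 / 2) • w - y = t • h + (t ^ 2 / 2) • w := by abel
  rw [e, inner_add_right, inner_smul_right, inner_smul_right, real_inner_comm, hperp] at h1
  rw [mul_div_assoc', le_div_iff₀ (by positivity)]
  linarith

theorem aux_lim {E F : Type*} [NormedAddCommGroup E] [NormedSpace ℝ E] [NormedAddCommGroup F]
    [NormedSpace ℝ F] {φ : E → F} {φ' : E →L[ℝ] F} {x₀ v : E} (hφ : HasFDerivAt φ φ' x₀)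
    {x : ℕ → E} {c : ℕ → ℝ} (hx : Tendsto x atTop (𝓝 x₀))
    (hc : Tendsto (fun k => c k • (x k - x₀)) atTop (𝓝 v)) :
    Tendsto (fun k => c k • (φ (x k) - φ x₀)) atTop (𝓝 (φ' v)) := by
  have h1 : Tendsto (fun k => x k - x₀) atTop (𝓝 0) := by
    simpa using hx.sub_const x₀
  have := (hasFDerivWithinAt_univ.2 hφ).lim h1 (.of_forall fun _ => mem_univ _) hc
  simpa using this

theorem aux_core (K : Set H) (hKred : C2ConeReducible K) (y₀ h lambar μ : H) (hy₀ : y₀ ∈ K)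
    (t : ℕ → ℝ) (y lam lam' : ℕ → H) (ht : ∀ k, 0 < t k) 
    (hy : Tendsto y atTop (𝓝 y₀))
    (hyh : Tendsto (fun k => (t k)⁻¹ • (y k - y₀)) atTop (𝓝 h))
    (hlam : Tendsto lam atTop (𝓝 lambar))
    (hN : ∀ k, lam k ∈ normalCone K (y k)) (hN' : ∀ k, lam' k ∈ normalCone K y₀)
    (hμ : Tendsto (fun k => (t k)⁻¹ • (lam k - lam' k)) atTop (𝓝 μ)) :
    ∃ w ∈ secondTangentSet K y₀ h, -⟪lambar, w⟫ ≤ ⟪μ, h⟫ := by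
  obtain ⟨C, Φ, Ψ, hCcl, hCcone, hΨ, hΨ0, hΨid, hΦ0, hΦ', hCK, hKC⟩ := aux_chart K hKred y₀ hy₀
  set B := fderiv ℝ (fderiv ℝ Ψ) 0 with hB
  have hD : HasFDerivAt (fderiv ℝ Ψ) B 0 :=
    ((hΨ.fderiv_right (m := 1) (by norm_num)).differentiableAt (by norm_num)).hasFDerivAt
  have hdiff : ∀ᶠ p in 𝓝 (0:H), DifferentiableAt ℝ Ψ p := by
    filter_upwards [hΨ.eventually (by simp)] with p hp
    exact hp.differentiableAt (by norm_num)
  obtain ⟨r, hr, hball⟩ := Metric.eventually_nhds_iff.1 hCK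
  set p : ℕ → H := fun k => Φ (y k) with hp
  have hp0 : Tendsto p atTop (𝓝 0) := by
    have := hΦ'.continuousAt.tendsto.comp hy
    rwa [hΦ0] at this
  have hph : Tendsto (fun k => (t k)⁻¹ • p k) atTop (𝓝 h) := by
    have := aux_lim hΦ' hy hyh
    simpa [hΦ0] using this
  have hKCk := hy.eventually hKC
  have hpC : ∀ᶠ k in atTop, p k ∈ C := by
    filter_upwards [hKCk] with k hk
    exact hk.2 (hN k).1
  have hhC : h ∈ C := by
    refine hCcl.mem_of_tendsto hph ?_
    filter_upwards [hpC] with k hk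
    exact hCcone _ (inv_nonneg.2 (ht k).le) _ hk
  refine ⟨B h h, ?_, ?_⟩
  · have hT := aux_taylor Ψ hΨ hΨid h
    refine IsBigO.trans_isLittleO ?_ hT
    refine IsBigO.of_bound 1 ?_
    have hsm : ∀ᶠ t in 𝓝[>] (0:ℝ), ‖t • h‖ < r := by
      have : Tendsto (fun t : ℝ => ‖t • h‖) (𝓝 0) (𝓝 ‖(0:ℝ) • h‖) :=
        Continuous.tendsto (by fun_prop) 0
      rw [zero_smul, norm_zero] at this
      exact (this.mono_left nhdsWithin_le_nhds).eventually (gt_mem_nhds hr)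
    filter_upwards [hsm, self_mem_nhdsWithin] with s hs hs0
    have hs0' : (0:ℝ) < s := hs0
    have hmem : Ψ (s • h) ∈ K :=
      hball (by rwa [dist_zero_right]) (hCcone s hs0'.le _ hhC)
    rw [one_mul, Real.norm_of_nonneg infDist_nonneg, ← hΨ0, ← dist_eq_norm, dist_comm]
    exact infDist_le_dist_of_mem hmem
  · have hDp : Tendsto (fun k => (t k)⁻¹ • (fderiv ℝ Ψ (p k) - fderiv ℝ Ψ 0)) atTop (𝓝 (B h)) :=
      aux_lim hD hp0 (by simpa using hph)
    have he2 : Tendsto (fun k => ((t k)⁻¹ • (fderiv ℝ Ψ (p k) - fderiv ℝ Ψ 0)) ((t k)⁻¹ • p k))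
      atTop (𝓝 (B h h)) :=
      (isBoundedBilinearMap_apply.continuous.tendsto (B h, h)).comp (hDp.prodMk_nhds hph)
    have hL := (hlam.inner (𝕜 := ℝ) he2).neg
    have hR := hμ.inner (𝕜 := ℝ) hph
    refine le_of_tendsto_of_tendsto hL hR ?_
    have hpr : ∀ᶠ k in atTop, ‖p k‖ < r := by
      have := hp0.norm
      rw [norm_zero] at this
      exact this.eventually (gt_mem_nhds hr)
    filter_upwards [hpC, hKCk, hpr, hp0.eventually hdiff] with k hkC hk hkr hkd
    have htk := ht k
    have hseg : ∀ s ∈ Icc (0:ℝ) 1, Ψ (s • p k) ∈ K := by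
      intro s hs
      refine hball ?_ (hCcone s hs.1 _ hkC)
      rw [dist_zero_right, norm_smul, Real.norm_of_nonneg hs.1]
      exact lt_of_le_of_lt (mul_le_of_le_one_left (norm_nonneg _) hs.2) hkr
    have hsmall : ∀ᶠ s in 𝓝[>] (0:ℝ), s ∈ Ioo (0:ℝ) 1 := Ioo_mem_nhdsGT one_pos
    have c1 : 0 ≤ ⟪lam k, fderiv ℝ Ψ (p k) (p k)⟫ := by
      have l1 : HasDerivAt (fun s : ℝ => (1 - s) • p k) (-p k) 0 := by
        simpa using ((hasDerivAt_id (0:ℝ)).const_sub 1).smul_const (p k)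
      have l2 : HasDerivAt (fun s : ℝ => Ψ ((1 - s) • p k)) (fderiv ℝ Ψ (p k) (-p k)) 0 := by
        have hf : HasFDerivAt Ψ (fderiv ℝ Ψ (p k)) ((1 - (0:ℝ)) • p k) := by
          simpa using hkd.hasFDerivAt
        exact hf.comp_hasDerivAt (0:ℝ) l1
      have l3 := (innerSL ℝ (lam k)).hasFDerivAt.comp_hasDerivAt (0:ℝ) (l2.sub_const (y k))
      have := aux_deriv_nonpos l3 (by simp [p, hk.1]) (by
        filter_upwards [hsmall] with s hs
        exact (hN k).2 _ (hseg (1 - s) ⟨by linarith [hs.2], by linarith [hs.1]⟩))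
      simpa using this
    have c2 : ⟪lam' k, p k⟫ ≤ 0 := by
      have l1 : HasDerivAt (fun s : ℝ => s • p k) (p k) 0 := by
        simpa using (hasDerivAt_id (0:ℝ)).smul_const (p k)
      have l2 : HasDerivAt (fun s : ℝ => Ψ (s • p k)) (fderiv ℝ Ψ 0 (p k)) 0 := by
        have hf : HasFDerivAt Ψ (fderiv ℝ Ψ 0) ((0:ℝ) • p k) := by
          simpa using (hΨ.differentiableAt (by norm_num)).hasFDerivAt
        exact hf.comp_hasDerivAt (0:ℝ) l1
      have l3 := (innerSL ℝ (lam' k)).hasFDerivAt.comp_hasDerivAt (0:ℝ) (l2.sub_const y₀)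
      have := aux_deriv_nonpos l3 (by simp [hΨ0]) (by
        filter_upwards [hsmall] with s hs
        exact (hN' k).2 _ (hseg s ⟨hs.1.le, hs.2.le⟩))
      simpa [hΨid] using this
    simp only [hΨid, smul_apply, sub_apply, map_smul,
      ContinuousLinearMap.id_apply, inner_smul_left, inner_smul_right, inner_sub_left,
      inner_sub_right, smul_sub, RCLike.conj_to_real]
    have hi : 0 < (t k)⁻¹ := inv_pos.2 htk
    have : 0 ≤ (t k)⁻¹ * ((t k)⁻¹ * (⟪lam k, fderiv ℝ Ψ (p k) (p k)⟫ - ⟪lam' k, p k⟫)) := by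
      have : 0 ≤ ⟪lam k, fderiv ℝ Ψ (p k) (p k)⟫ - ⟪lam' k, p k⟫ := by linarith
      positivity
    linarith

theorem aux_inner (f : X → ℝ) (g : X → H) (x : X) (lam : H) (v : X) :
    ⟪gradLx f g x lam, v⟫ = fderiv ℝ f x v + ⟪lam, fderiv ℝ g x v⟫ := by
  rw [gradLx, inner_add_left, ContinuousLinearMap.adjoint_inner_left, gradient,
    InnerProductSpace.toDual_symm_apply]

theorem aux_mult (f : X → ℝ) (g : X → H) (K : Set H)
    (hf : ContDiff ℝ 2 f) (hg : ContDiff ℝ 2 g) (xbar : X) (lambar : H)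
    (hMcalm : MultMapCalm f g K xbar lambar) :
    ∃ ε > (0:ℝ), ∃ κ > (0:ℝ), ∀ ab : X × H, ‖ab‖ ≤ ε →
      ∀ p ∈ SKKT f g K ab ∩ closedBall ((xbar, lambar) : X × H) ε,
        ∃ lam₀ ∈ Lambda f g K xbar, ‖p.2 - lam₀‖ ≤ κ * (‖p.1 - xbar‖ + ‖ab.1‖ + ‖ab.2‖) := by
  obtain ⟨κ, hκ, ε₀, hε₀, δ₀, hδ₀, hM⟩ := hMcalm
  have hf1 : DifferentiableAt ℝ (fderiv ℝ f) xbar :=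
    ((hf.fderiv_right (m := 1) (by norm_num)).differentiable (by norm_num)) xbar
  have hg1 : DifferentiableAt ℝ (fderiv ℝ g) xbar :=
    ((hg.fderiv_right (m := 1) (by norm_num)).differentiable (by norm_num)) xbar
  have hg0 : DifferentiableAt ℝ g xbar := hg.differentiable (by norm_num) xbar
  obtain ⟨c1, hc1, hb1⟩ := hf1.isBigO_sub.exists_pos
  obtain ⟨c2, hc2, hb2⟩ := hg1.isBigO_sub.exists_pos
  obtain ⟨c3, hc3, hb3⟩ := hg0.isBigO_sub.exists_pos
  obtain ⟨r, hr, hball⟩ := Metric.eventually_nhds_iff.1 (hb1.bound.and (hb2.bound.and hb3.bound))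
  set M := ‖lambar‖ + 1 with hMdef
  have hMpos : 0 < M := by positivity
  set Q := 1 + c1 + c2 * M + c3 with hQ
  have hQpos : 0 < Q := by positivity
  refine ⟨min (min 1 (r / 2)) (min δ₀ (ε₀ / (3 * Q))), by positivity, κ * Q, by positivity, ?_⟩
  rintro ⟨a, b⟩ hab ⟨x, lam⟩ ⟨⟨hp1, hp2⟩, hpb⟩
  simp only at hp1 hp2 ⊢
  set ε := min (min 1 (r / 2)) (min δ₀ (ε₀ / (3 * Q))) with hε
  have he1 : ε ≤ 1 := (min_le_left _ _).trans (min_le_left _ _)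
  have he2 : ε ≤ r / 2 := (min_le_left _ _).trans (min_le_right _ _)
  have he3 : ε ≤ δ₀ := (min_le_right _ _).trans (min_le_left _ _)
  have he4 : ε ≤ ε₀ / (3 * Q) := (min_le_right _ _).trans (min_le_right _ _)
  have ha : ‖a‖ ≤ ε := (norm_fst_le (a, b)).trans hab
  have hb : ‖b‖ ≤ ε := (norm_snd_le (a, b)).trans hab
  rw [mem_closedBall, dist_eq_norm] at hpb
  have hx : ‖x - xbar‖ ≤ ε := (norm_fst_le ((x, lam) - (xbar, lambar))).trans hpb
  have hl : ‖lam - lambar‖ ≤ ε := (norm_snd_le ((x, lam) - (xbar, lambar))).trans hpb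
  have hlM : ‖lam‖ ≤ M := by
    have : ‖lam‖ ≤ ‖lam - lambar‖ + ‖lambar‖ := by
      simpa using norm_add_le (lam - lambar) lambar
    linarith
  obtain ⟨k1, k2, k3⟩ := hball (y := x) (by rw [dist_eq_norm]; linarith)
  have ha' : ‖gradLx f g xbar lam‖ ≤ ‖a‖ + c1 * ‖x - xbar‖ + c2 * M * ‖x - xbar‖ := by
    have e : gradLx f g xbar lam = a - (InnerProductSpace.toDual ℝ X).symm
        (fderiv ℝ f x - fderiv ℝ f xbar)
        - ContinuousLinearMap.adjoint (fderiv ℝ g x - fderiv ℝ g xbar) lam := by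
      rw [hp1, gradLx, gradLx, gradient, gradient, map_sub, map_sub, sub_apply]
      abel
    rw [e]
    have n1 : ‖(InnerProductSpace.toDual ℝ X).symm (fderiv ℝ f x - fderiv ℝ f xbar)‖
        ≤ c1 * ‖x - xbar‖ := by
      rw [LinearIsometryEquiv.norm_map]; exact k1
    have n2 : ‖ContinuousLinearMap.adjoint (fderiv ℝ g x - fderiv ℝ g xbar) lam‖
        ≤ c2 * M * ‖x - xbar‖ := by
      refine (ContinuousLinearMap.le_opNorm _ _).trans ?_
      rw [LinearIsometryEquiv.norm_map]
      calc _ ≤ (c2 * ‖x - xbar‖) * M := by gcongr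
        _ = _ := by ring
    exact (norm_sub_le _ _).trans (add_le_add ((norm_sub_le _ _).trans (by gcongr)) n2)
  have hb' : ‖g xbar - (g x + b)‖ ≤ c3 * ‖x - xbar‖ + ‖b‖ := by
    have e : g xbar - (g x + b) = -((g x - g xbar) + b) := by abel
    rw [e, norm_neg]
    exact (norm_add_le _ _).trans (by gcongr)
  have hT : ‖((gradLx f g xbar lam, g xbar - (g x + b)) : X × H)‖
      ≤ Q * (‖x - xbar‖ + ‖a‖ + ‖b‖) := by
    rw [Prod.norm_def]
    have q1 : 0 ≤ c1 * (‖a‖ + ‖b‖) := by positivity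
    have q2 : 0 ≤ c2 * M * (‖a‖ + ‖b‖) := by positivity
    have q3 : 0 ≤ c3 * (‖a‖ + ‖b‖) := by positivity
    have q4 : 0 ≤ c1 * ‖x - xbar‖ := by positivity
    have q5 : 0 ≤ c2 * M * ‖x - xbar‖ := by positivity
    have q6 : 0 ≤ c3 * ‖x - xbar‖ := by positivity
    have q7 := norm_nonneg a
    have q8 := norm_nonneg b
    have q9 := norm_nonneg (x - xbar)
    refine max_le (ha'.trans ?_) (hb'.trans ?_) <;> rw [hQ] <;> linarith
  have hTe : ‖((gradLx f g xbar lam, g xbar - (g x + b)) : X × H)‖ ≤ ε₀ := by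
    refine hT.trans ?_
    have : Q * (‖x - xbar‖ + ‖a‖ + ‖b‖) ≤ Q * (3 * (ε₀ / (3 * Q))) := by
      gcongr; linarith
    refine this.trans (le_of_eq ?_)
    field_simp
  obtain ⟨lam₀, h0, h1⟩ := hM _ hTe lam ⟨⟨rfl, by
    simpa using hp2⟩, by rw [mem_closedBall, dist_eq_norm]; linarith⟩
  refine ⟨lam₀, h0, h1.trans ?_⟩
  calc _ ≤ κ * (Q * (‖x - xbar‖ + ‖a‖ + ‖b‖)) := by gcongr
    _ = _ := by ring

set_option maxHeartbeats 2000000 in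
theorem aux_seq (f : X → ℝ) (g : X → H) (K : Set H)
    (hf : ContDiff ℝ 2 f) (hg : ContDiff ℝ 2 g) (hKred : C2ConeReducible K)
    (xbar : X) (lambar : H)
    (hKKT : gradLx f g xbar lambar = 0 ∧ lambar ∈ normalCone K (g xbar))
    (hSOSC : SOSC f g K xbar lambar)
    (t : ℕ → ℝ) (x a : ℕ → X) (lam lam' b : ℕ → H) (d : X) (μ : H)
    (ht : ∀ k, 0 < t k) (hx : Tendsto x atTop (𝓝 xbar)) (hlam : Tendsto lam atTop (𝓝 lambar))
    (hlam' : Tendsto lam' atTop (𝓝 lambar)) (hb0 : Tendsto b atTop (𝓝 0))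
    (ha : Tendsto (fun k => (t k)⁻¹ • a k) atTop (𝓝 0))
    (hb : Tendsto (fun k => (t k)⁻¹ • b k) atTop (𝓝 0))
    (hak : ∀ k, a k = gradLx f g (x k) (lam k))
    (hN : ∀ k, lam k ∈ normalCone K (g (x k) + b k))
    (hL : ∀ k, lam' k ∈ Lambda f g K xbar)
    (hd : Tendsto (fun k => (t k)⁻¹ • (x k - xbar)) atTop (𝓝 d))
    (hμ : Tendsto (fun k => (t k)⁻¹ • (lam k - lam' k)) atTop (𝓝 μ)) : d = 0 := by
  by_contra hd0
  have hg0 : HasFDerivAt g (fderiv ℝ g xbar) xbar :=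
    (hg.differentiable (by norm_num) xbar).hasFDerivAt
  have hg1 : HasFDerivAt (fderiv ℝ g) (fderiv ℝ (fderiv ℝ g) xbar) xbar :=
    (((hg.fderiv_right (m := 1) (by norm_num)).differentiable (by norm_num)) xbar).hasFDerivAt
  set h := fderiv ℝ g xbar d with hh
  set y : ℕ → H := fun k => g (x k) + b k with hy
  have hy0 : Tendsto y atTop (𝓝 (g xbar)) := by
    simpa using (hg0.continuousAt.tendsto.comp hx).add hb0
  have hyh : Tendsto (fun k => (t k)⁻¹ • (y k - g xbar)) atTop (𝓝 h) := by
    have := (aux_lim hg0 hx hd).add hb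
    rw [add_zero] at this
    refine this.congr fun k => ?_
    rw [← smul_add]; congr 1; simp only [hy]; abel
  have hy0' : Tendsto (fun k => y k - g xbar) atTop (𝓝 0) := by
    simpa using hy0.sub_const (g xbar)
  have htan : h ∈ tangentConeAt ℝ K (g xbar) :=
    mem_tangentConeAt_of_seq atTop (fun k => (t k)⁻¹) (fun k => y k - g xbar) hy0'
      (.of_forall fun k => by simpa using (hN k).1) hyh
  have hperp : ⟪h, lambar⟫ = 0 := by
    apply le_antisymm
    · refine le_of_tendsto (hyh.inner (𝕜 := ℝ) (tendsto_const_nhds (x := lambar)))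
        (.of_forall fun k => ?_)
      rw [inner_smul_left, real_inner_comm]
      exact mul_nonpos_of_nonneg_of_nonpos (inv_nonneg.2 (ht k).le) (hKKT.2.2 _ (hN k).1)
    · refine ge_of_tendsto (hyh.inner (𝕜 := ℝ) hlam) (.of_forall fun k => ?_)
      rw [inner_smul_left, real_inner_comm]
      refine mul_nonneg (inv_nonneg.2 (ht k).le) ?_
      have := (hN k).2 _ hKKT.2.1
      rw [← neg_sub, inner_neg_right] at this
      linarith
  obtain ⟨w, hw, hwμ⟩ := aux_core K hKred (g xbar) h lambar μ hKKT.2.1 t y lam lam' ht hy0 hyh hlam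
    hN (fun k => (hL k).2) hμ
  have hS := hSOSC d ⟨htan, hperp⟩ hd0
  have hsup : ⟪lambar, w⟫ ≤ suppFn lambar (secondTangentSet K (g xbar) h) := by
    refine le_csSup ⟨0, ?_⟩ ⟨w, hw, rfl⟩
    rintro _ ⟨w', hw', rfl⟩
    exact aux_bdd K (g xbar) h lambar hKKT.2 hperp w' hw'
  set F : X → ℝ := fun x => f x + ⟪lambar, g x⟫ with hF
  have hFC : ContDiff ℝ 2 F := hf.add ((innerSL ℝ lambar).contDiff.comp hg)
  have hF1 : HasFDerivAt (fderiv ℝ F) (fderiv ℝ (fderiv ℝ F) xbar) xbar :=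
    (((hFC.fderiv_right (m := 1) (by norm_num)).differentiable (by norm_num)) xbar).hasFDerivAt
  have hFd : ∀ z v, fderiv ℝ F z v = ⟪gradLx f g z lambar, v⟫ := by
    intro z v
    have e1 : HasFDerivAt f (fderiv ℝ f z) z := (hf.differentiable (by norm_num) z).hasFDerivAt
    have e2 : HasFDerivAt g (fderiv ℝ g z) z := (hg.differentiable (by norm_num) z).hasFDerivAt
    have e3 : HasFDerivAt F (fderiv ℝ f z + (innerSL ℝ lambar).comp (fderiv ℝ g z)) z :=
      e1.add ((innerSL ℝ lambar).hasFDerivAt.comp z e2)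
    rw [e3.fderiv, aux_inner]
    rfl
  have hlim1 : Tendsto (fun k => ((t k)⁻¹ • (fderiv ℝ F (x k) - fderiv ℝ F xbar)) d) atTop
      (𝓝 (fderiv ℝ (fderiv ℝ F) xbar d d)) :=
    (isBoundedBilinearMap_apply.continuous.tendsto (fderiv ℝ (fderiv ℝ F) xbar d, d)).comp
      ((aux_lim hF1 hx hd).prodMk_nhds tendsto_const_nhds)
  have hDg : Tendsto (fun k => fderiv ℝ g (x k) d) atTop (𝓝 h) :=
    (isBoundedBilinearMap_apply.continuous.tendsto (fderiv ℝ g xbar, d)).comp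
      ((hg1.continuousAt.tendsto.comp hx).prodMk_nhds tendsto_const_nhds)
  have hDg2 : Tendsto (fun k => ((t k)⁻¹ • (fderiv ℝ g (x k) - fderiv ℝ g xbar)) d) atTop
      (𝓝 (fderiv ℝ (fderiv ℝ g) xbar d d)) :=
    (isBoundedBilinearMap_apply.continuous.tendsto (fderiv ℝ (fderiv ℝ g) xbar d, d)).comp
      ((aux_lim hg1 hx hd).prodMk_nhds tendsto_const_nhds)
  have hlam0 : Tendsto (fun k => lam' k - lambar) atTop (𝓝 0) := by
    simpa using hlam'.sub_const lambar
  have hlim2 := ((ha.inner (𝕜 := ℝ) (tendsto_const_nhds (x := d))).sub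
    (hμ.inner (𝕜 := ℝ) hDg)).sub (hlam0.inner (𝕜 := ℝ) hDg2)
  have heq : fderiv ℝ (fderiv ℝ F) xbar d d = -⟪μ, h⟫ := by
    have := tendsto_nhds_unique hlim1 (hlim2.congr fun k => ?_)
    · simpa using this
    · have z1 : ⟪gradLx f g xbar (lam' k), d⟫ = 0 := by rw [(hL k).1, inner_zero_left]
      have z2 : ⟪gradLx f g xbar lambar, d⟫ = 0 := by rw [hKKT.1, inner_zero_left]
      have z3 : ⟪a k, d⟫ = ⟪gradLx f g (x k) (lam k), d⟫ := by rw [hak k]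
      simp only [smul_apply, sub_apply, hFd, inner_smul_left, inner_smul_right, inner_sub_left,
        inner_sub_right, smul_eq_mul, RCLike.conj_to_real, aux_inner] at z1 z2 z3 ⊢
      linear_combination (t k)⁻¹ * z3 + (t k)⁻¹ * z1
  rw [iteratedFDeriv_two_apply] at hS
  simp only [Matrix.cons_val_zero, Matrix.cons_val_one] at hS
  linarith

theorem aux_x (f : X → ℝ) (g : X → H) (K : Set H)
    (hf : ContDiff ℝ 2 f) (hg : ContDiff ℝ 2 g) (hKred : C2ConeReducible K)
    (xbar : X) (lambar : H)
    (hKKT : gradLx f g xbar lambar = 0 ∧ lambar ∈ normalCone K (g xbar))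
    (hSOSC : SOSC f g K xbar lambar) (ε₁ : ℝ) (hε₁ : 0 < ε₁) (κ : ℝ) (hκ : 0 < κ)
    (hmult : ∀ ab : X × H, ‖ab‖ ≤ ε₁ →
      ∀ p ∈ SKKT f g K ab ∩ closedBall ((xbar, lambar) : X × H) ε₁,
        ∃ lam₀ ∈ Lambda f g K xbar, ‖p.2 - lam₀‖ ≤ κ * (‖p.1 - xbar‖ + ‖ab.1‖ + ‖ab.2‖)) :
    ∃ ε > (0:ℝ), ε ≤ ε₁ ∧ ∃ l > (0:ℝ), ∀ ab : X × H, ‖ab‖ ≤ ε →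
      ∀ p ∈ SKKT f g K ab ∩ closedBall ((xbar, lambar) : X × H) ε,
        ‖p.1 - xbar‖ ≤ l * (‖ab.1‖ + ‖ab.2‖) := by
  by_contra! hcon
  have hk1 : ∀ k : ℕ, (0:ℝ) < (k:ℝ) + 1 := fun k => by positivity
  have hle : ∀ k : ℕ, ε₁ / ((k:ℝ) + 1) ≤ ε₁ := fun k =>
    div_le_self hε₁.le (by linarith [(Nat.cast_nonneg k : (0:ℝ) ≤ k)])
  choose ab hab p hp hlt using fun k : ℕ =>
    hcon (ε₁ / ((k:ℝ) + 1)) (div_pos hε₁ (hk1 k)) (hle k) ((k:ℝ) + 1) (hk1 k)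
  choose lam' hlam'L hlam' using fun k : ℕ =>
    hmult (ab k) ((hab k).trans (hle k)) (p k) ⟨(hp k).1, closedBall_subset_closedBall (hle k) (hp k).2⟩
  set t : ℕ → ℝ := fun k => ‖(p k).1 - xbar‖ with htdef
  have hsum0 : ∀ k, 0 ≤ ‖(ab k).1‖ + ‖(ab k).2‖ := fun k => by positivity
  have ht : ∀ k, 0 < t k := fun k =>
    lt_of_le_of_lt (mul_nonneg (hk1 k).le (hsum0 k)) (hlt k)
  have hsumle : ∀ k, ‖(ab k).1‖ + ‖(ab k).2‖ ≤ t k := fun k => by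
    refine le_trans ?_ (hlt k).le
    exact le_mul_of_one_le_left (hsum0 k) (by linarith [(Nat.cast_nonneg k : (0:ℝ) ≤ k)])
  have hsumle2 : ∀ k, (t k)⁻¹ * (‖(ab k).1‖ + ‖(ab k).2‖) ≤ 1 / ((k:ℝ) + 1) := fun k => by
    rw [inv_mul_le_iff₀ (ht k), mul_one_div, le_div_iff₀ (hk1 k), mul_comm]
    exact (hlt k).le
  have hone : Tendsto (fun k : ℕ => 1 / ((k:ℝ) + 1)) atTop (𝓝 0) :=
    tendsto_one_div_add_atTop_nhds_zero_nat
  have heps : Tendsto (fun k : ℕ => ε₁ / ((k:ℝ) + 1)) atTop (𝓝 0) := by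
    simpa [div_eq_mul_inv] using hone.const_mul ε₁
  have hab0 : Tendsto ab atTop (𝓝 0) := squeeze_zero_norm hab heps
  have hp0 : Tendsto p atTop (𝓝 (xbar, lambar)) := by
    rw [tendsto_iff_dist_tendsto_zero]
    exact squeeze_zero (fun _ => dist_nonneg) (fun k => (hp k).2) heps
  have hx0 : Tendsto (fun k => (p k).1) atTop (𝓝 xbar) := (continuous_fst.tendsto _).comp hp0
  have hl0 : Tendsto (fun k => (p k).2) atTop (𝓝 lambar) := (continuous_snd.tendsto _).comp hp0
  have hb0 : Tendsto (fun k => (ab k).2) atTop (𝓝 0) := (continuous_snd.tendsto _).comp hab0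
  have ht0 : Tendsto t atTop (𝓝 0) := by
    simpa using (hx0.sub_const xbar).norm
  have hll : ∀ k, ‖(p k).2 - lam' k‖ ≤ 2 * κ * t k := fun k => by
    refine (hlam' k).trans ?_
    have := hsumle k
    calc _ ≤ κ * (t k + t k) := by
          refine mul_le_mul_of_nonneg_left ?_ hκ.le
          simp only [htdef] at this ⊢; linarith
      _ = _ := by ring
  have hl'0 : Tendsto lam' atTop (𝓝 lambar) := by
    have h1 : Tendsto (fun k => (p k).2 - lam' k) atTop (𝓝 0) :=
      squeeze_zero_norm hll (by simpa using ht0.const_mul (2 * κ))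
    simpa using hl0.sub h1
  have ha1 : Tendsto (fun k => (t k)⁻¹ • (ab k).1) atTop (𝓝 0) := by
    refine squeeze_zero_norm (fun k => ?_) hone
    rw [norm_smul, Real.norm_of_nonneg (inv_nonneg.2 (ht k).le)]
    refine le_trans ?_ (hsumle2 k)
    exact mul_le_mul_of_nonneg_left (by linarith [norm_nonneg (ab k).2]) (inv_nonneg.2 (ht k).le)
  have hb1 : Tendsto (fun k => (t k)⁻¹ • (ab k).2) atTop (𝓝 0) := by
    refine squeeze_zero_norm (fun k => ?_) hone
    rw [norm_smul, Real.norm_of_nonneg (inv_nonneg.2 (ht k).le)]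
    refine le_trans ?_ (hsumle2 k)
    exact mul_le_mul_of_nonneg_left (by linarith [norm_nonneg (ab k).1]) (inv_nonneg.2 (ht k).le)
  have hnd : ∀ k, ‖(t k)⁻¹ • ((p k).1 - xbar)‖ = 1 := fun k => by
    rw [norm_smul, Real.norm_of_nonneg (inv_nonneg.2 (ht k).le)]
    exact inv_mul_cancel₀ (ht k).ne'
  have hnμ : ∀ k, ‖(t k)⁻¹ • ((p k).2 - lam' k)‖ ≤ 2 * κ := fun k => by
    rw [norm_smul, Real.norm_of_nonneg (inv_nonneg.2 (ht k).le), inv_mul_le_iff₀ (ht k), mul_comm]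
    exact hll k
  obtain ⟨⟨d, μ⟩, -, φ, hφ, hlim⟩ := (isCompact_closedBall (0 : X × H) (max 1 (2 * κ))).tendsto_subseq
    (x := fun k => ((t k)⁻¹ • ((p k).1 - xbar), (t k)⁻¹ • ((p k).2 - lam' k))) (fun k => by
      rw [mem_closedBall_zero_iff, Prod.norm_def]
      exact max_le_max (hnd k).le (hnμ k))
  have hφt := hφ.tendsto_atTop
  have hdl : Tendsto (fun k => (t (φ k))⁻¹ • ((p (φ k)).1 - xbar)) atTop (𝓝 d) :=
    (continuous_fst.tendsto _).comp hlim
  have hμl : Tendsto (fun k => (t (φ k))⁻¹ • ((p (φ k)).2 - lam' (φ k))) atTop (𝓝 μ) :=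
    (continuous_snd.tendsto _).comp hlim
  have hd1 : ‖d‖ = 1 := by
    refine tendsto_nhds_unique hdl.norm ?_
    simp only [hnd]
    exact tendsto_const_nhds
  have := aux_seq f g K hf hg hKred xbar lambar hKKT hSOSC (fun k => t (φ k))
    (fun k => (p (φ k)).1) (fun k => (ab (φ k)).1) (fun k => (p (φ k)).2) (fun k => lam' (φ k))
    (fun k => (ab (φ k)).2) d μ (fun k => ht _) (hx0.comp hφt) (hl0.comp hφt) (hl'0.comp hφt)
    (hb0.comp hφt) (ha1.comp hφt) (hb1.comp hφt) (fun k => (hp (φ k)).1.1)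
    (fun k => (hp (φ k)).1.2) (fun k => hlam'L _) hdl hμl
  rw [this, norm_zero] at hd1
  exact zero_ne_one hd1

/-- **Proposition 2.2.** Calmness of the multiplier mapping together with the SOSC implies
semi-isolated calmness of the KKT solution mapping. -/
theorem multCalm_SOSC_implies_semiIsolatedCalm
    (f : X → ℝ) (g : X → H) (K : Set H)
    (hf : ContDiff ℝ 2 f) (hg : ContDiff ℝ 2 g)
    (hKne : K.Nonempty) (hKcl : IsClosed K) (hKconv : Convex ℝ K)
    (hKred : C2ConeReducible K)
    (xbar : X) (lambar : H)
    (hKKT : gradLx f g xbar lambar = 0 ∧ lambar ∈ normalCone K (g xbar))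
    (hMcalm : MultMapCalm f g K xbar lambar)
    (hSOSC : SOSC f g K xbar lambar) :
    SemiIsolatedCalm f g K xbar lambar := by

  obtain ⟨ε₁, hε₁, κ, hκ, hmult⟩ := aux_mult f g K hf hg xbar lambar hMcalm
  obtain ⟨ε, hε, hεle, l, hl, hx⟩ := aux_x f g K hf hg hKred xbar lambar hKKT hSOSC ε₁ hε₁ κ hκ hmult
  refine ⟨ε, hε, ε, hε, l + κ * (l + 1), by positivity, ?_⟩
  intro ab hab p hp
  obtain ⟨lam₀, h0, h1⟩ := hmult ab (hab.trans hεle) p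
    ⟨hp.1, closedBall_subset_closedBall hεle hp.2⟩
  have h2 := hx ab hab p hp
  refine ⟨(xbar, lam₀), rfl, h0, ?_⟩
  rw [Prod.norm_def]
  have hs : 0 ≤ ‖ab.1‖ + ‖ab.2‖ := by positivity
  have h3 : κ * (‖p.1 - xbar‖ + ‖ab.1‖ + ‖ab.2‖) ≤
      κ * (l + 1) * (‖ab.1‖ + ‖ab.2‖) := by
    rw [mul_assoc]
    exact mul_le_mul_of_nonneg_left (by linarith) hκ.le
  have h4 : 0 ≤ κ * (l + 1) * (‖ab.1‖ + ‖ab.2‖) := by positivity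
  have h5 : 0 ≤ l * (‖ab.1‖ + ‖ab.2‖) := by positivity
  have h6 : (l + κ * (l + 1)) * (‖ab.1‖ + ‖ab.2‖) =
    l * (‖ab.1‖ + ‖ab.2‖) + κ * (l + 1) * (‖ab.1‖ + ‖ab.2‖) := by ring
  rw [h6]
  refine max_le ?_ ?_
  · exact h2.trans (by linarith)
  · exact (h1.trans h3).trans (by linarith)
end
end

section
/- Let f : X → ℝ and g : X → H be continuously differentiable and K ⊆ H a nonempty closed convex set. For every c > 0 the augmented Lagrangian 𝓛(·, ·, c) is differentiable on X × H, with partial gradients ∇_x 𝓛(x, λ, c) = ∇f(x) + c·∇g(x)*[g(x) + c⁻¹λ − Π_K(g(x) + c⁻¹λ)] and ∇_λ 𝓛(x, λ, c) = g(x) − Π_K(g(x) + c⁻¹λ). -/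
open Metric Set Filter Topology Asymptotics
open scoped RealInnerProductSpace

noncomputable section

variable {X H : Type*} [NormedAddCommGroup X] [InnerProductSpace ℝ X] [FiniteDimensional ℝ X]
variable [NormedAddCommGroup H] [InnerProductSpace ℝ H] [FiniteDimensional ℝ H]

theorem infDist_eq_aux {K : Set H} {projK : H → H}
    (hproj : ∀ y : H, projK y ∈ K ∧ ∀ z ∈ K, ‖y - projK y‖ ≤ ‖y - z‖) (y : H) :
    infDist y K = ‖y - projK y‖ := by
  apply le_antisymm
  · rw [← dist_eq_norm]
    exact infDist_le_dist_of_mem (hproj y).1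
  · rw [le_infDist ⟨_, (hproj y).1⟩]
    intro z hz
    rw [dist_eq_norm]
    exact (hproj y).2 z hz

theorem inner_le_aux {K : Set H} {projK : H → H} (hKconv : Convex ℝ K)
    (hproj : ∀ y : H, projK y ∈ K ∧ ∀ z ∈ K, ‖y - projK y‖ ≤ ‖y - z‖) (y : H) :
    ∀ w ∈ K, ⟪y - projK y, w - projK y⟫ ≤ 0 := by
  rw [← norm_eq_iInf_iff_real_inner_le_zero hKconv (hproj y).1]
  haveI : Nonempty K := ⟨⟨_, (hproj y).1⟩⟩
  apply le_antisymm
  · exact le_ciInf fun w => (hproj y).2 w w.2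
  · exact ciInf_le (f := fun w : K => ‖y - w‖)
      ⟨0, by rintro _ ⟨w, rfl⟩; exact norm_nonneg _⟩ ⟨_, (hproj y).1⟩

theorem hasFDerivAt_infDist_sq_aux {K : Set H} {projK : H → H} (hKconv : Convex ℝ K)
    (hproj : ∀ y : H, projK y ∈ K ∧ ∀ z ∈ K, ‖y - projK y‖ ≤ ‖y - z‖) (y : H) :
    HasFDerivAt (fun y => infDist y K ^ 2) ((2 : ℝ) • innerSL ℝ (y - projK y)) y := by
  rw [hasFDerivAt_iff_isLittleO_nhds_zero]
  have hO : (fun h : H => infDist (y + h) K ^ 2 - infDist y K ^ 2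
      - ((2 : ℝ) • innerSL ℝ (y - projK y)) h) =O[𝓝 0] fun h : H => ‖h‖ ^ 2 := by
    apply IsBigO.of_bound 1
    refine Eventually.of_forall fun h => ?_
    have h1 : infDist (y + h) K ≤ ‖(y - projK y) + h‖ := by
      have := infDist_le_dist_of_mem (x := y + h) (hproj y).1
      rw [dist_eq_norm] at this
      rwa [add_sub_right_comm] at this
    have h1' : infDist (y + h) K ^ 2 ≤ ‖(y - projK y) + h‖ ^ 2 :=
      pow_le_pow_left₀ infDist_nonneg h1 2
    have h2 := inner_le_aux hKconv hproj y _ (hproj (y + h)).1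
    have h3 : infDist (y + h) K ^ 2
        = ‖(y - projK y) + (h - (projK (y + h) - projK y))‖ ^ 2 := by
      rw [infDist_eq_aux hproj]
      congr 2
      abel
    have h4 := infDist_eq_aux hproj y
    rw [norm_add_sq_real] at h1' h3
    rw [inner_sub_right] at h3
    have h5 := sq_nonneg ‖h - (projK (y + h) - projK y)‖
    have h6 := sq_nonneg ‖h‖
    rw [h4]
    simp only [ContinuousLinearMap.smul_apply, innerSL_apply_apply, smul_eq_mul, Real.norm_eq_abs]
    rw [abs_le, abs_of_nonneg h6]
    constructor <;> linarith
  refine hO.trans_isLittleO ?_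
  simpa using (isLittleO_norm_pow_id (E' := H) one_lt_two)

theorem hasFDerivAt_augLag_aux (f : X → ℝ) (g : X → H) {K : Set H}
    (hf : ContDiff ℝ 1 f) (hg : ContDiff ℝ 1 g) (hKconv : Convex ℝ K)
    {projK : H → H}
    (hproj : ∀ y : H, projK y ∈ K ∧ ∀ z ∈ K, ‖y - projK y‖ ≤ ‖y - z‖)
    (c : ℝ) {E : Type*} [NormedAddCommGroup E] [NormedSpace ℝ E]
    (u : E → X) (v : E → H) (u' : E →L[ℝ] X) (v' : E →L[ℝ] H) (e : E)
    (hu : HasFDerivAt u u' e) (hv : HasFDerivAt v v' e) :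
    HasFDerivAt (fun e => augLag f g K (u e) (v e) c)
      ((fderiv ℝ f (u e)).comp u' + (c / 2) • (((2 : ℝ) • innerSL ℝ
          (g (u e) + c⁻¹ • v e - projK (g (u e) + c⁻¹ • v e))).comp
          ((fderiv ℝ g (u e)).comp u' + c⁻¹ • v'))
        - (1 / (2 * c)) • ((2 : ℕ) • (innerSL ℝ (v e)).comp v')) e := by
  have hf' := (hf.differentiable one_ne_zero (u e)).hasFDerivAt.comp e hu
  have hg' := (hg.differentiable one_ne_zero (u e)).hasFDerivAt.comp e hu
  have hy := hg'.add (hv.const_smul c⁻¹)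
  have hd := (hasFDerivAt_infDist_sq_aux hKconv hproj (g (u e) + c⁻¹ • v e)).comp e hy
  have hn := hv.norm_sq
  exact (hf'.add (hd.const_mul (c / 2))).sub (hn.const_mul (1 / (2 * c)))

/-- Differentiability of the augmented Lagrangian and its partial gradients (formula (2.3)). -/
theorem augLag_differentiable_and_gradients
    (f : X → ℝ) (g : X → H) (K : Set H)
    (hf : ContDiff ℝ 1 f) (hg : ContDiff ℝ 1 g)
    (hKne : K.Nonempty) (hKcl : IsClosed K) (hKconv : Convex ℝ K)
    (projK : H → H)
    (hproj : ∀ y : H, projK y ∈ K ∧ ∀ z ∈ K, ‖y - projK y‖ ≤ ‖y - z‖)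
    (c : ℝ) (hc : 0 < c) :
    Differentiable ℝ (fun p : X × H => augLag f g K p.1 p.2 c) ∧
    (∀ x : X, ∀ lam : H, gradient (fun x' => augLag f g K x' lam c) x =
      gradient f x + c • (ContinuousLinearMap.adjoint (fderiv ℝ g x)
        (g x + c⁻¹ • lam - projK (g x + c⁻¹ • lam)))) ∧
    (∀ x : X, ∀ lam : H, gradient (fun lam' => augLag f g K x lam' c) lam =
      g x - projK (g x + c⁻¹ • lam)) := by
  refine ⟨fun p => ?_, fun x lam => ?_, fun x lam => ?_⟩
  · exact (hasFDerivAt_augLag_aux f g hf hg hKconv hproj c Prod.fst Prod.snd _ _ p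
      hasFDerivAt_fst hasFDerivAt_snd).differentiableAt
  · have h := hasFDerivAt_augLag_aux f g hf hg hKconv hproj c (fun x : X => x)
      (fun _ : X => lam) _ _ x (hasFDerivAt_id x) (hasFDerivAt_const lam x)
    refine ext_inner_right ℝ fun w => ?_
    rw [inner_add_left, inner_smul_left, ContinuousLinearMap.adjoint_inner_left]
    simp only [gradient, InnerProductSpace.toDual_symm_apply]
    rw [h.fderiv]
    simp [inner_sub_left, inner_add_left, inner_smul_left]
    ring
  · have h := hasFDerivAt_augLag_aux f g hf hg hKconv hproj c (fun _ : H => x)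
      (fun l : H => l) _ _ lam (hasFDerivAt_const x lam) (hasFDerivAt_id lam)
    refine ext_inner_right ℝ fun w => ?_
    simp only [gradient, InnerProductSpace.toDual_symm_apply]
    rw [h.fderiv]
    simp [inner_sub_left, inner_add_left, inner_smul_left]
    field_simp
    ring
end
end

section
/- Let f : X → ℝ and g : X → H be continuously differentiable and K ⊆ H a nonempty closed convex set. A pair (x̄, λ̄) ∈ X × H is a KKT point of (P) (i.e., ∇f(x̄) + ∇g(x̄)*λ̄ = 0 and λ̄ ∈ N_K(g(x̄))) if and only if for every c > 0 one has ∇f(x̄) + c·∇g(x̄)*[g(x̄) + c⁻¹λ̄ − Π_K(g(x̄) + c⁻¹λ̄)] = 0 and g(x̄) − Π_K(g(x̄) + c⁻¹λ̄) = 0, i.e., ∇_{(x,λ)}𝓛(x̄, λ̄, c) = 0. -/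
open Metric Set Filter Topology Asymptotics
open scoped RealInnerProductSpace

noncomputable section

variable {X H : Type*} [NormedAddCommGroup X] [InnerProductSpace ℝ X] [FiniteDimensional ℝ X]
variable [NormedAddCommGroup H] [InnerProductSpace ℝ H] [FiniteDimensional ℝ H]

/-- `(x̄, λ̄)` is a KKT point iff the full gradient of the augmented Lagrangian vanishes
for every `c > 0`. -/
theorem kkt_iff_gradAugLag_eq_zero
    (f : X → ℝ) (g : X → H) (K : Set H)
    (hf : ContDiff ℝ 1 f) (hg : ContDiff ℝ 1 g)
    (hKne : K.Nonempty) (hKcl : IsClosed K) (hKconv : Convex ℝ K)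
    (projK : H → H)
    (hproj : ∀ y : H, projK y ∈ K ∧ ∀ z ∈ K, ‖y - projK y‖ ≤ ‖y - z‖)
    (xbar : X) (lambar : H) :
    (gradLx f g xbar lambar = 0 ∧ lambar ∈ normalCone K (g xbar)) ↔
      ∀ c : ℝ, 0 < c →
        gradient f xbar + c • (ContinuousLinearMap.adjoint (fderiv ℝ g xbar)
          (g xbar + c⁻¹ • lambar - projK (g xbar + c⁻¹ • lambar))) = 0 ∧
        g xbar - projK (g xbar + c⁻¹ • lambar) = 0 := by
  have key : ∀ c : ℝ, 0 < c → g xbar - projK (g xbar + c⁻¹ • lambar) = 0 →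
      c • (ContinuousLinearMap.adjoint (fderiv ℝ g xbar)
          (g xbar + c⁻¹ • lambar - projK (g xbar + c⁻¹ • lambar)))
        = ContinuousLinearMap.adjoint (fderiv ℝ g xbar) lambar := by
    intro c hc h
    have e : g xbar + c⁻¹ • lambar - projK (g xbar + c⁻¹ • lambar) = c⁻¹ • lambar := by
      rw [← sub_eq_zero.mp h]; abel
    rw [e, map_smul, smul_smul, mul_inv_cancel₀ hc.ne', one_smul]
  constructor
  · rintro ⟨h1, hgK, hN⟩ c hc
    have h0 : g xbar - projK (g xbar + c⁻¹ • lambar) = 0 := by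
      obtain ⟨hp, hmin⟩ := hproj (g xbar + c⁻¹ • lambar)
      have hm := hmin _ hgK
      have hi := hN _ hp
      generalize projK (g xbar + c⁻¹ • lambar) = p at *
      have e1 : g xbar + c⁻¹ • lambar - p = (g xbar - p) + c⁻¹ • lambar := by abel
      have e2 : g xbar + c⁻¹ • lambar - g xbar = c⁻¹ • lambar := by abel
      rw [e1, e2] at hm
      have hs := pow_le_pow_left₀ (norm_nonneg _) hm 2
      rw [norm_add_sq_real, inner_smul_right, real_inner_comm] at hs
      rw [← neg_sub, inner_neg_right] at hi
      have hci : 0 < c⁻¹ := inv_pos.mpr hc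
      have : 0 ≤ c⁻¹ * ⟪lambar, g xbar - p⟫ := mul_nonneg hci.le (by linarith)
      have h2 : ‖g xbar - p‖ ^ 2 = 0 := le_antisymm (by linarith) (sq_nonneg _)
      exact norm_eq_zero.mp (pow_eq_zero_iff two_ne_zero |>.mp h2)
    refine ⟨?_, h0⟩
    rw [key c hc h0]
    exact h1
  · intro h
    obtain ⟨h1, h0⟩ := h 1 one_pos
    rw [key 1 one_pos h0] at h1
    obtain ⟨hp, hmin⟩ := hproj (g xbar + (1 : ℝ)⁻¹ • lambar)
    rw [← sub_eq_zero.mp h0] at hp hmin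
    rw [inv_one, one_smul] at hmin
    refine ⟨h1, hp, ?_⟩
    have hinf : ‖g xbar + lambar - g xbar‖ = ⨅ w : K, ‖g xbar + lambar - w‖ := by
      haveI : Nonempty K := hKne.to_subtype
      apply le_antisymm
      · exact le_ciInf fun w => hmin w w.2
      · exact ciInf_le ⟨0, by rintro _ ⟨w, rfl⟩; exact norm_nonneg _⟩ (⟨g xbar, hp⟩ : K)
    have := (norm_eq_iInf_iff_real_inner_le_zero hKconv hp).mp hinf
    simpa using this
end
end

section
/- Let K ⊆ H be a nonempty closed convex set, f : X → ℝ, g : X → H, and c > 0. Then for every fixed x ∈ X, the function λ ↦ 𝓛(x, λ, c) = f(x) + (c/2)·dist²(g(x) + c⁻¹λ, K) − (1/(2c))‖λ‖² is concave on H. -/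
open Metric Set Filter Topology Asymptotics
open scoped RealInnerProductSpace

noncomputable section

variable {X H : Type*} [NormedAddCommGroup X] [InnerProductSpace ℝ X] [FiniteDimensional ℝ X]
variable [NormedAddCommGroup H] [InnerProductSpace ℝ H] [FiniteDimensional ℝ H]

/-- The augmented Lagrangian is concave in the multiplier variable. -/
theorem augLag_concaveOn
    (f : X → ℝ) (g : X → H) (K : Set H)
    (hKne : K.Nonempty) (hKcl : IsClosed K) (hKconv : Convex ℝ K)
    (c : ℝ) (hc : 0 < c) (x : X) :
    ConcaveOn ℝ Set.univ (fun lam : H => augLag f g K x lam c) := by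
  have key : ∀ (z u : H), c / 2 * (dist (g x + c⁻¹ • u) z) ^ 2 - 1 / (2 * c) * ‖u‖ ^ 2
      = c / 2 * ‖g x - z‖ ^ 2 + ⟪g x - z, u⟫ := by
    intro z u
    have h : g x + c⁻¹ • u - z = (g x - z) + c⁻¹ • u := by abel
    rw [dist_eq_norm, h, norm_add_sq_real, norm_smul, inner_smul_right, mul_pow,
      Real.norm_eq_abs, sq_abs]
    field_simp
    ring
  refine ⟨convex_univ, ?_⟩
  intro u _ v _ a b ha hb hab
  obtain ⟨z, hz, hd⟩ := hKcl.exists_infDist_eq_dist hKne (g x + c⁻¹ • (a • u + b • v))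
  have hle : ∀ w : H, augLag f g K x w c ≤ f x + (c / 2 * ‖g x - z‖ ^ 2 + ⟪g x - z, w⟫) := by
    intro w
    rw [← key z w]
    unfold augLag
    have h1 : infDist (g x + c⁻¹ • w) K ≤ dist (g x + c⁻¹ • w) z := infDist_le_dist_of_mem hz
    have h2 : c / 2 * infDist (g x + c⁻¹ • w) K ^ 2 ≤ c / 2 * dist (g x + c⁻¹ • w) z ^ 2 :=
      mul_le_mul_of_nonneg_left (pow_le_pow_left₀ infDist_nonneg h1 2) (by positivity)
    linarith
  have heq : augLag f g K x (a • u + b • v) c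
      = f x + (c / 2 * ‖g x - z‖ ^ 2 + (a * ⟪g x - z, u⟫ + b * ⟪g x - z, v⟫)) := by
    have h3 := key z (a • u + b • v)
    rw [inner_add_right, inner_smul_right, inner_smul_right] at h3
    unfold augLag
    rw [hd]
    linarith
  show a • augLag f g K x u c + b • augLag f g K x v c ≤ augLag f g K x (a • u + b • v) c
  rw [heq, smul_eq_mul, smul_eq_mul]
  have h4 := mul_le_mul_of_nonneg_left (hle u) ha
  have h5 := mul_le_mul_of_nonneg_left (hle v) hb
  obtain rfl : b = 1 - a := by linarith
  linarith
end
end
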